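/- arXiv:0904.3895 — 7 statements merged into one kernel-verified Lean document; each statement's English description precedes it below -/
import Mathlib

section
/- Let ∂ : C → G be a crossed module that is free on a map φ : Y → C. Then the map φ is injective. -/
/-!
An abelian group over the trivial group is a crossed module, and every map from `Y` into it
satisfies the compatibility condition in the universal property. So every map from `Y` to `ℤ`
factors through `φ` (it extends to a homomorphism on `C`); since maps to `ℤ` separate the
points of `Y`, so does `φ`.
-/

/-- A crossed module: groups `C`, `G`, a homomorphism `∂ : C → G` (`map`), and an action of
`G` on `C` by group automorphisms (`act`) such that `∂(g • c) = g ∂(c) g⁻¹` and the Peiffer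
identities `(∂ a) • b = a b a⁻¹` hold. -/
structure CrossedModule (C : Type*) (G : Type*) [Group C] [Group G] where
  map : C →* G
  act : G →* MulAut C
  map_act : ∀ (g : G) (c : C), map (act g c) = g * map c * g⁻¹
  peiffer : ∀ a b : C, act (map a) b = a * b * a⁻¹

/-- A crossed module `∂ : C → G` is free on `φ : Y → C` if for every crossed module
`δ : D → H`, every homomorphism `α : G → H` and every map `b : Y → D` with
`α(∂(φ y)) = δ(b y)` for all `y`, there is a unique homomorphism `β : C → D` with
`β(φ y) = b y` for all `y`, such that `(β, α)` is a morphism of crossed modules, i.e.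
`δ ∘ β = α ∘ ∂` and `β(g • c) = α(g) • β(c)`. -/
def CrossedModule.IsFreeOn {C : Type*} {G : Type*} [Group C] [Group G]
    (M : CrossedModule C G) {Y : Type*} (φ : Y → C) : Prop :=
  ∀ {D : Type*} {H : Type*} [Group D] [Group H] (N : CrossedModule D H) (α : G →* H)
    (b : Y → D), (∀ y, α (M.map (φ y)) = N.map (b y)) →
    ∃! β : C →* D, (∀ y, β (φ y) = b y) ∧ (∀ c, N.map (β c) = α (M.map c)) ∧
      ∀ (g : G) (c : C), β (M.act g c) = N.act (α g) (β c)

/-- An abelian group `A` over a trivial group `H`, with trivial action, as a crossed module. -/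
def CrossedModule.ofCommGroup (A H : Type*) [CommGroup A] [Group H] [Subsingleton H] :
    CrossedModule A H where
  map := 1
  act := 1
  map_act _ _ := Subsingleton.elim _ _
  peiffer a b := by simp

/-- If the crossed module `∂ : C → G` is free on `φ : Y → C`, then `φ` is injective. -/
theorem CrossedModule.IsFreeOn.injective {C : Type*} {G : Type*} {Y : Type*}
    [Group C] [Group G] (M : CrossedModule C G) (φ : Y → C)
    (hfree : M.IsFreeOn φ) : Function.Injective φ := by
  classical
  intro y z hyz
  by_contra hne
  -- The indicator of `y`, with values in `ℤ` written multiplicatively, separates `y` from `z`.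
  -- `ULift` and `PUnit` put the test object in the universes over which freeness quantifies.
  let g : ULift (Multiplicative ℤ) := ⟨Multiplicative.ofAdd 1⟩
  obtain ⟨β, ⟨hβ, -, -⟩, -⟩ := hfree
    (CrossedModule.ofCommGroup (ULift (Multiplicative ℤ)) PUnit) 1
    (fun x => if x = y then g else 1) (fun _ => Subsingleton.elim _ _)
  have hg : g = 1 := by
    have hy := hβ y
    have hz := hβ z
    rw [← hyz, hy, if_pos rfl, if_neg (Ne.symm hne)] at hz
    exact hz
  have h01 : (1 : ℤ) = 0 := congrArg (fun t => Multiplicative.toAdd (ULift.down t)) hg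
  exact one_ne_zero h01
end

section
/- For n ≥ 2, let ∂ : C_n → B_n be the free crossed module over the Artin braid group B_n on the single-element subset {σ_1}. Then ∂ is surjective, its kernel is contained in the center of C_n, and its kernel is isomorphic as a group to H₂(B_n). -/
/-- The braid relators on `m` generators: the commutators `x_i x_j x_i⁻¹ x_j⁻¹` for
`i + 2 ≤ j` (i.e. `|i - j| ≥ 2`) and the braid relators `x_i x_j x_i x_j⁻¹ x_i⁻¹ x_j⁻¹`
for `j = i + 1`. -/
def braidRels (m : ℕ) : Set (FreeGroup (Fin m)) :=
  {r | ∃ i j : Fin m,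
    ((i : ℕ) + 2 ≤ (j : ℕ) ∧
      r = .of i * .of j * (.of i)⁻¹ * (.of j)⁻¹) ∨
    ((i : ℕ) + 1 = (j : ℕ) ∧
      r = .of i * .of j * .of i * (.of j)⁻¹ * (.of i)⁻¹ * (.of j)⁻¹)}

/-- The Artin braid group `B_n` on `n` strings, presented with the `n - 1` Artin
generators subject to the braid relations. -/
abbrev BraidGroup (n : ℕ) := PresentedGroup (braidRels (n - 1))

/-- The Artin generator `σ_{i+1}` of `B_n` (0-indexed: `braidσ i` for `i : Fin (n-1)`
is the paper's `σ_{i+1}`). -/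
def braidσ {n : ℕ} (i : Fin (n - 1)) : BraidGroup n := PresentedGroup.of i

section HopfH2

variable (G : Type*) [Group G]

/-- The canonical free presentation `π : FreeGroup G → G`. -/
def hopfπ : FreeGroup G →* G := FreeGroup.lift id

/-- The kernel `N` of the canonical free presentation `F = FreeGroup G → G`. -/
def hopfN : Subgroup (FreeGroup G) := (hopfπ G).ker

/-- The subgroup `N ⊓ [F, F]` of `F = FreeGroup G`. -/
def hopfTop : Subgroup (FreeGroup G) := hopfN G ⊓ commutator (FreeGroup G)

/-- The subgroup `[F, N]`, viewed inside `N ⊓ [F, F]`. -/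
def hopfRel : Subgroup (hopfTop G) :=
  (⁅(⊤ : Subgroup (FreeGroup G)), hopfN G⁆).subgroupOf (hopfTop G)

instance : (hopfN G).Normal := MonoidHom.normal_ker _

instance : (hopfRel G).Normal := Subgroup.normal_subgroupOf

/-- The second homology group of `G` with trivial integer coefficients, defined via
Hopf's formula `H₂(G) = (N ∩ [F, F]) / [F, N]` applied to the canonical free
presentation `G ≅ F/N`, `F = FreeGroup G`. -/
abbrev GroupH2 := hopfTop G ⧸ hopfRel G

end HopfH2

open scoped commutatorElement

/-! ### Central extensions -/

/-- Two homomorphisms into a central extension that agree over the base agree on commutators. -/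
theorem eq_on_commutator {A E G : Type*} [Group A] [Group E] [Group G] (q : E →* G)
    (hq : q.ker ≤ Subgroup.center E) (f g : A →* E) (h : ∀ a, q (f a) = q (g a))
    {a : A} (ha : a ∈ commutator A) : f a = g a := by
  have key : ∀ a, ∃ z ∈ Subgroup.center E, f a = z * g a := fun a =>
    ⟨f a * (g a)⁻¹, hq (by simp [MonoidHom.mem_ker, h]), by group⟩
  suffices commutator A ≤ f.eqLocus g from this ha
  rw [commutator_def, Subgroup.commutator_le]
  intro x _ y _
  obtain ⟨z, hz, hx⟩ := key x
  obtain ⟨w, hw, hy⟩ := key y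
  rw [Subgroup.mem_center_iff] at hz hw
  change f ⁅x, y⁆ = g ⁅x, y⁆
  rw [map_commutatorElement, map_commutatorElement, hx, hy, commutatorElement_def,
    commutatorElement_def, mul_inv_rev, mul_inv_rev]
  calc z * g x * (w * g y) * ((g x)⁻¹ * z⁻¹) * ((g y)⁻¹ * w⁻¹)
      = z * (g x * w) * g y * (g x)⁻¹ * z⁻¹ * (g y)⁻¹ * w⁻¹ := by group
    _ = (z * w) * g x * g y * (g x)⁻¹ * z⁻¹ * (g y)⁻¹ * w⁻¹ := by rw [hw]; group
    _ = (w * z) * g x * g y * (g x)⁻¹ * z⁻¹ * (g y)⁻¹ * w⁻¹ := by rw [hz w]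
    _ = w * ((z * (g x * g y * (g x)⁻¹)) * z⁻¹ * (g y)⁻¹) * w⁻¹ := by group
    _ = w * (g x * g y * (g x)⁻¹ * (g y)⁻¹) * w⁻¹ := by rw [← hz]; group
    _ = g x * g y * (g x)⁻¹ * (g y)⁻¹ := by rw [← hw]; group

/-- A central extension `q : E → G` is a crossed module, where `g : G` acts as conjugation by any
lift of `g` to `E`. -/
noncomputable def centralCrossedModule {E G : Type*} [Group E] [Group G] (q : E →* G)
    (hs : Function.Surjective q) (hq : q.ker ≤ Subgroup.center E) : CrossedModule E G :=
  have hk : q.ker ≤ (MulAut.conj : E →* MulAut E).ker := fun x hx => by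
    ext y
    have := Subgroup.mem_center_iff.1 (hq hx) y
    simp [← this]
  have hl : ∀ e, q.liftOfSurjective hs ⟨MulAut.conj, hk⟩ (q e) = MulAut.conj e := fun e =>
    MonoidHom.liftOfRightInverse_comp_apply _ _ _ _ _
  { map := q
    act := q.liftOfSurjective hs ⟨MulAut.conj, hk⟩
    map_act := fun g c => by
      obtain ⟨e, rfl⟩ := hs g
      rw [hl]
      simp
    peiffer := fun a b => by
      rw [hl]
      simp }

/-- An abelian group as a crossed module over the trivial group. -/
def abelianCrossedModule (D H : Type*) [CommGroup D] [Group H] [Subsingleton H] :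
    CrossedModule D H where
  map := 1
  act := 1
  map_act _ _ := Subsingleton.elim _ _
  peiffer a b := by simp

namespace CrossedModule

universe v w

variable {C G : Type*} [Group C] [Group G] (M : CrossedModule C G)

theorem ker_le_center : M.map.ker ≤ Subgroup.center C := by
  intro a ha
  rw [Subgroup.mem_center_iff]
  intro b
  have h := M.peiffer a b
  rw [MonoidHom.mem_ker.1 ha, map_one, MulAut.one_apply] at h
  exact eq_mul_inv_iff_mul_eq.1 h

theorem range_normal : M.map.range.Normal := by
  refine ⟨?_⟩
  rintro _ ⟨c, rfl⟩ g
  exact ⟨M.act g c, M.map_act g c⟩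

/-- If `∂` is onto and `C` is free on one generator, whose image in `G` is sent to `1` by some
`ε : G → ℤ`, then `ker ∂ ≤ [C, C]`: freeness forces every homomorphism from `C` to an abelian group
to factor through `ε ∘ ∂`. It suffices to test on lifts of `ℚ / ℤ`, which exist in every universe
and separate the points of `Cᵃᵇ`. -/
theorem ker_le_commutator {Y : Type*} [Subsingleton Y] (φ : Y → C) (y₀ : Y)
    (hfree : IsFreeOn.{_, _, _, v, w} M φ) (hs : Function.Surjective M.map)
    (ε : G →* Multiplicative ℤ) (hε : ε (M.map (φ y₀)) = Multiplicative.ofAdd 1) :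
    M.map.ker ≤ commutator C := by
  intro x hx
  by_contra hxc
  have hne : Additive.ofMul (Abelianization.of x) ≠ 0 := by
    intro h
    have h1 : Abelianization.of x = 1 := h
    rw [← MonoidHom.mem_ker, Abelianization.ker_of] at h1
    exact hxc h1
  obtain ⟨χ, hχ⟩ := CharacterModule.exists_character_apply_ne_zero_of_ne_zero hne
  let X : C →* ULift.{v} (Multiplicative (AddCircle (1 : ℚ))) :=
    MulEquiv.ulift.symm.toMonoidHom.comp
      ((AddMonoidHom.toMultiplicativeRight χ).comp Abelianization.of)
  let X' : C →* ULift.{v} (Multiplicative (AddCircle (1 : ℚ))) :=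
    (zpowersHom _ (X (φ y₀))).comp (ε.comp M.map)
  have hinv : ∀ (D : Type v) [CommGroup D] (f : C →* D) (g : G) (c : C),
      f (M.act g c) = f c := fun D _ f g c => by
    obtain ⟨a, rfl⟩ := hs g
    simp [M.peiffer]
  obtain ⟨β, -, huniq⟩ := hfree (abelianCrossedModule _ PUnit.{w + 1}) 1
    (fun y => X (φ y)) (fun _ => rfl)
  have e1 := huniq X ⟨fun _ => rfl, fun _ => rfl, fun g c => hinv _ X g c⟩
  have e2 := huniq X' ⟨fun y => by
    rw [Subsingleton.elim y y₀]
    simp [X', hε], fun _ => rfl, fun g c => hinv _ X' g c⟩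
  have e3 : X x = X' x := by rw [e1, e2]
  have e4 : X' x = 1 := by simp [X', MonoidHom.mem_ker.1 hx]
  rw [e4] at e3
  exact hχ (congrArg (fun t => Multiplicative.toAdd t.down) e3)

end CrossedModule

/-! ### Comparison with the Hopf formula -/

section Hopf

variable (G : Type*) [Group G]

/-- The group `F / [F, N]` for the canonical free presentation `F → G` with kernel `N`. -/
abbrev HopfExt := FreeGroup G ⧸ ⁅(⊤ : Subgroup (FreeGroup G)), hopfN G⁆

theorem hopfN_commutator_le : ⁅(⊤ : Subgroup (FreeGroup G)), hopfN G⁆ ≤ hopfN G :=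
  Subgroup.commutator_le_right _ _

/-- The central extension `F / [F, N] → F / N = G`. -/
def hopfExtMap : HopfExt G →* G := QuotientGroup.lift _ (hopfπ G) (hopfN_commutator_le G)

theorem hopfExtMap_surjective : Function.Surjective (hopfExtMap G) := fun g =>
  ⟨QuotientGroup.mk (FreeGroup.of g), by simp [hopfExtMap, hopfπ]⟩

theorem hopfExtMap_ker : (hopfExtMap G).ker ≤ Subgroup.center (HopfExt G) := by
  intro x hx
  induction x using QuotientGroup.induction_on with
  | H x =>
    rw [Subgroup.mem_center_iff]
    intro y
    induction y using QuotientGroup.induction_on with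
    | H y =>
      have h : ⁅y, x⁆ ∈ ⁅(⊤ : Subgroup (FreeGroup G)), hopfN G⁆ :=
        Subgroup.commutator_mem_commutator (Subgroup.mem_top y) hx
      have h2 := (QuotientGroup.eq_one_iff _).2 h
      rw [commutatorElement_def] at h2
      simpa [mul_inv_eq_iff_eq_mul] using h2

variable {G}

/-- A central extension `p : C → G` with `ker p ≤ [C, C]` that maps over `G` to `F / [F, N]` has
kernel `H₂(G)`. A lift `F → C` of the presentation induces a map back `F / [F, N] → C`, and the two
composites are identities on commutator subgroups. -/
theorem ker_equiv_groupH2 {C : Type*} [Group C] (p : C →* G) (hs : Function.Surjective p)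
    (hc : p.ker ≤ Subgroup.center C) (hk : p.ker ≤ commutator C)
    (β : C →* HopfExt G) (hβ : ∀ c, hopfExtMap G (β c) = p c) :
    Nonempty (p.ker ≃* GroupH2 G) := by
  let Γ : FreeGroup G →* C := FreeGroup.lift (Function.surjInv hs)
  have hΓ : ∀ x, p (Γ x) = hopfπ G x := fun x => by
    have : p.comp Γ = hopfπ G := by
      ext g
      simp [Γ, hopfπ, Function.surjInv_eq]
    exact DFunLike.congr_fun this x
  have hΓk : ⁅(⊤ : Subgroup (FreeGroup G)), hopfN G⁆ ≤ Γ.ker := by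
    rw [Subgroup.commutator_le]
    intro x _ y hy
    have hy' : Γ y ∈ p.ker := by
      rw [MonoidHom.mem_ker, hΓ]
      exact hy
    rw [MonoidHom.mem_ker, map_commutatorElement, commutatorElement_eq_one_iff_mul_comm]
    exact Subgroup.mem_center_iff.1 (hc hy') _
  let γ : HopfExt G →* C := QuotientGroup.lift _ Γ hΓk
  have hγ : ∀ e, p (γ e) = hopfExtMap G e := fun e => by
    induction e using QuotientGroup.induction_on with
    | H x => exact hΓ x
  have hΓtop : ∀ x : hopfTop G, Γ x ∈ p.ker := fun x => by
    rw [MonoidHom.mem_ker, hΓ]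
    exact x.2.1
  let Γ' : hopfTop G →* p.ker := (Γ.comp (hopfTop G).subtype).codRestrict p.ker hΓtop
  have hΓ' : hopfRel G ≤ Γ'.ker := fun x hx => by
    rw [MonoidHom.mem_ker]
    exact Subtype.ext (hΓk (Subgroup.mem_subgroupOf.1 hx))
  let θ : GroupH2 G →* p.ker := QuotientGroup.lift _ Γ' hΓ'
  refine ⟨(MulEquiv.ofBijective θ ⟨?_, ?_⟩).symm⟩
  · rw [injective_iff_map_eq_one]
    intro a ha
    induction a using QuotientGroup.induction_on with
    | H x =>
      have h1 : Γ x = 1 := congrArg Subtype.val ha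
      have h2 : (β.comp Γ) x = QuotientGroup.mk' _ (x : FreeGroup G) :=
        eq_on_commutator (hopfExtMap G) (hopfExtMap_ker G) _ _
          (fun a => (hβ (Γ a)).trans (hΓ a)) x.2.2
      rw [MonoidHom.comp_apply, h1, map_one] at h2
      exact (QuotientGroup.eq_one_iff _).2
        (Subgroup.mem_subgroupOf.2 ((QuotientGroup.eq_one_iff _).1 h2.symm))
  · rintro ⟨k, hkp⟩
    have hkc := hk hkp
    have h1 : (γ.comp β) k = MonoidHom.id C k :=
      eq_on_commutator p hc _ _ (fun a => (hγ (β a)).trans (hβ a)) hkc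
    have h2 : β k ∈ (commutator (FreeGroup G)).map (QuotientGroup.mk'
        ⁅(⊤ : Subgroup (FreeGroup G)), hopfN G⁆) := by
      rw [commutator_def, Subgroup.map_commutator, ← MonoidHom.range_eq_map,
        MonoidHom.range_eq_top.2 (QuotientGroup.mk'_surjective _)]
      have : β k ∈ (commutator C).map β := Subgroup.mem_map_of_mem _ hkc
      rw [commutator_def, Subgroup.map_commutator] at this
      exact Subgroup.commutator_mono le_top le_top this
    obtain ⟨x, hx, hxk⟩ := h2
    have hxN : x ∈ hopfN G := by
      have : hopfExtMap G (QuotientGroup.mk' _ x) = 1 := by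
        rw [hxk, hβ]
        exact hkp
      exact this
    refine ⟨QuotientGroup.mk ⟨x, hxN, hx⟩, Subtype.ext ?_⟩
    change γ (QuotientGroup.mk' _ x) = k
    rw [hxk]
    exact h1

end Hopf

/-! ### Braid groups -/

theorem braid_rel {n : ℕ} (i j : Fin (n - 1)) (h : (i : ℕ) + 1 = j) :
    braidσ i * braidσ j * braidσ i * (braidσ j)⁻¹ * (braidσ i)⁻¹ * (braidσ j)⁻¹ = 1 := by
  have : PresentedGroup.mk (braidRels (n - 1)) _ = 1 :=
    PresentedGroup.one_of_mem ⟨i, j, Or.inr ⟨h, rfl⟩⟩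
  simp only [map_mul, map_inv] at this
  exact this

/-- `σ_{j+1}` is the conjugate of `σ_j` by `σ_j σ_{j+1}`, so `σ₁` normally generates. -/
theorem braid_normal_eq_top {n : ℕ} (h0 : 0 < n - 1) (S : Subgroup (BraidGroup n)) (hS : S.Normal)
    (h : braidσ (⟨0, h0⟩ : Fin (n - 1)) ∈ S) : S = ⊤ := by
  have hall : ∀ (k : ℕ) (hk : k < n - 1), braidσ (⟨k, hk⟩ : Fin (n - 1)) ∈ S := by
    intro k
    induction k with
    | zero => exact fun _ => h
    | succ k ih =>
      intro hk
      have h1 := ih (by omega)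
      have hr := braid_rel (n := n) ⟨k, by omega⟩ ⟨k + 1, hk⟩ rfl
      generalize braidσ (⟨k, by omega⟩ : Fin (n - 1)) = a at *
      generalize braidσ (⟨k + 1, hk⟩ : Fin (n - 1)) = b at *
      have hb : b = (a * b) * a * (a * b)⁻¹ := by
        rw [mul_inv_rev, ← mul_assoc]
        exact (mul_inv_eq_one.1 hr).symm
      rw [hb]
      exact hS.conj_mem _ h1 _
  rw [eq_top_iff, ← PresentedGroup.closure_range_of, Subgroup.closure_le]
  rintro _ ⟨i, rfl⟩
  exact hall i i.2

/-- The exponent sum `B_n → ℤ`. -/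
def braidExp (n : ℕ) : BraidGroup n →* Multiplicative ℤ :=
  PresentedGroup.toGroup (f := fun _ => Multiplicative.ofAdd 1) (by
    rintro r ⟨i, j, ⟨-, rfl⟩ | ⟨-, rfl⟩⟩ <;> simp)

theorem braidExp_σ {n : ℕ} (i : Fin (n - 1)) : braidExp n (braidσ i) = Multiplicative.ofAdd 1 :=
  PresentedGroup.toGroup.of _

/-- For `n ≥ 2`, the free crossed module `∂ : C_n → B_n` on the singleton `{σ_1}` is a
central extension of `B_n` with kernel isomorphic to `H₂(B_n)`. -/
theorem braid_freeCrossedModule_centralExtension (n : ℕ) (hn : 2 ≤ n)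
    {C : Type*} [Group C] (M : CrossedModule C (BraidGroup n))
    (φ : ({braidσ (⟨0, by omega⟩ : Fin (n - 1))} : Set (BraidGroup n)) → C)
    (hfree : M.IsFreeOn φ)
    (hφ : ∀ s, M.map (φ s) = (s : BraidGroup n)) :
    Function.Surjective M.map ∧ M.map.ker ≤ Subgroup.center C ∧
      Nonempty (M.map.ker ≃* GroupH2 (BraidGroup n)) := by
  have hs : Function.Surjective M.map := by
    rw [← MonoidHom.range_eq_top]
    exact braid_normal_eq_top (by omega) _ M.range_normal ⟨_, hφ ⟨_, rfl⟩⟩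
  refine ⟨hs, M.ker_le_center, ?_⟩
  have hk := M.ker_le_commutator φ ⟨_, rfl⟩ hfree hs (braidExp n) (by
    rw [hφ]
    exact braidExp_σ _)
  -- The target universes of `hfree` are arbitrary, so `F / [F, N] → B_n` is lifted to them.
  let q := (MulEquiv.ulift.symm.toMonoidHom.comp (hopfExtMap (BraidGroup n))).comp
    MulEquiv.ulift.toMonoidHom
  have hqs : Function.Surjective q := MulEquiv.ulift.symm.surjective.comp
    ((hopfExtMap_surjective _).comp MulEquiv.ulift.surjective)
  have hqc : q.ker ≤ Subgroup.center _ := fun x hx => by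
    have hx' : x.down ∈ (hopfExtMap (BraidGroup n)).ker := congrArg ULift.down hx
    rw [Subgroup.mem_center_iff]
    exact fun y => ULift.ext _ _ (Subgroup.mem_center_iff.1 (hopfExtMap_ker _ hx') y.down)
  obtain ⟨β, ⟨-, hβ, -⟩, -⟩ := hfree (centralCrossedModule q hqs hqc)
    MulEquiv.ulift.symm.toMonoidHom
    (fun y => Function.surjInv hqs (MulEquiv.ulift.symm (M.map (φ y))))
    (fun y => (Function.surjInv_eq hqs _).symm)
  exact ker_equiv_groupH2 M.map hs M.ker_le_center hk ((MulEquiv.ulift : ULift (HopfExt (BraidGroup n)) ≃* _).toMonoidHom.comp β)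
    (fun c => congrArg ULift.down (hβ c))
end

section
/- The second group homology H₂(B_3) of the Artin braid group B_3 with trivial integer coefficients is the trivial group. -/
open scoped commutatorElement

/-- The kernel of a split central extension meets the commutator subgroup trivially. -/
lemma eq_one_of_central_section {E G : Type*} [Group E] [Group G] (p : E →* G)
    (hp : p.ker ≤ Subgroup.center E) (s : G →* E) (hs : ∀ g, p (s g) = g)
    {x : E} (hx : p x = 1) (hc : x ∈ commutator E) : x = 1 := by
  have hcen : ∀ e, e * (s (p e))⁻¹ ∈ Subgroup.center E := fun e ↦ hp (by
    simp [MonoidHom.mem_ker, hs])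
  let f : E →* Subgroup.center E := MonoidHom.mk' (fun e ↦ ⟨e * (s (p e))⁻¹, hcen e⟩) (by
    intro u v
    ext
    have h := Subgroup.mem_center_iff.mp (hcen v) (s (p u))⁻¹
    simp only [map_mul, mul_inv_rev, Subgroup.coe_mul]
    calc u * v * ((s (p v))⁻¹ * (s (p u))⁻¹) = u * (v * (s (p v))⁻¹ * (s (p u))⁻¹) := by group
      _ = u * ((s (p u))⁻¹ * (v * (s (p v))⁻¹)) := by rw [h]
      _ = _ := by group)
  have hf : f x = 1 := by
    have hle : commutator E ≤ f.ker := by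
      rw [commutator_def, Subgroup.commutator_le]
      intro u _ v _
      rw [MonoidHom.mem_ker, map_commutatorElement, commutatorElement_eq_one_iff_mul_comm]
      exact Subtype.ext (Subgroup.mem_center_iff.mp (f v).2 (f u))
    exact hle hc
  simpa [f, hx] using congrArg Subtype.val hf

/-- A correction by a central element turns lifts of a braid pair into a braid pair. -/
lemma braid_relation_of_central {E : Type*} [Group E] {a b z : E}
    (hz : z ∈ Subgroup.center E) (h : a * b * a = z * (b * a * b)) :
    a * (b * z) * a = (b * z) * a * (b * z) := by
  have hc := Subgroup.mem_center_iff.mp hz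
  calc a * (b * z) * a = a * b * (z * a) := by group
    _ = a * b * a * z := by rw [← hc a]; group
    _ = (z * (b * a * b)) * z := by rw [h]
    _ = b * a * b * z * z := by rw [← hc (b * a * b)]
    _ = b * (a * b * z) * z := by group
    _ = b * (z * (a * b)) * z := by rw [hc (a * b)]
    _ = _ := by group

/-- Every central extension of `B₃` splits. -/
lemma exists_section_braidGroup_three {E : Type*} [Group E] (p : E →* BraidGroup 3)
    (hsurj : Function.Surjective p) (hp : p.ker ≤ Subgroup.center E) :
    ∃ s : BraidGroup 3 →* E, ∀ g, p (s g) = g := by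
  obtain ⟨a, ha⟩ := hsurj (braidσ 0)
  obtain ⟨b, hb⟩ := hsurj (braidσ 1)
  have hbraid : (braidσ 0 * braidσ 1 * braidσ 0 : BraidGroup 3)
      = braidσ 1 * braidσ 0 * braidσ 1 := by
    have h := PresentedGroup.one_of_mem (rels := braidRels (3 - 1))
      (x := .of 0 * .of 1 * .of 0 * (.of 1)⁻¹ * (.of 0)⁻¹ * (.of 1)⁻¹) ⟨0, 1, .inr ⟨rfl, rfl⟩⟩
    simp only [map_mul, map_inv] at h
    rw [mul_inv_eq_one, mul_inv_eq_iff_eq_mul, mul_inv_eq_iff_eq_mul] at h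
    exact h
  have hz : p (a * b * a * (b * a * b)⁻¹) = 1 := by
    simp only [map_mul, map_inv, ha, hb, hbraid, mul_inv_cancel]
  have hrel := braid_relation_of_central (a := a) (b := b) (hp hz) (by group)
  generalize a * b * a * (b * a * b)⁻¹ = z at hz hrel
  let f : Fin (3 - 1) → E := ![a, b * z]
  have hf : ∀ r ∈ braidRels (3 - 1), FreeGroup.lift f r = 1 := by
    rintro r ⟨i, j, ⟨hij, -⟩ | ⟨hij, rfl⟩⟩
    · have := j.isLt
      omega
    · obtain rfl : i = 0 := by ext; have := j.isLt; simp; omega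
      obtain rfl : j = 1 := by ext; simp at hij ⊢; omega
      simp only [map_mul, map_inv, FreeGroup.lift_apply_of]
      rw [mul_inv_eq_one, mul_inv_eq_iff_eq_mul, mul_inv_eq_iff_eq_mul]
      exact hrel
  refine ⟨PresentedGroup.toGroup hf, fun g ↦ ?_⟩
  have hid : p.comp (PresentedGroup.toGroup hf) = MonoidHom.id _ := by
    ext i
    have hi : p (f i) = braidσ i := by
      fin_cases i
      · exact ha
      · change p (b * z) = braidσ 1
        rw [map_mul, hz, hb, mul_one]
    simpa [braidσ] using hi
  exact DFunLike.congr_fun hid g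

/-- The second homology group of the braid group `B₃` is trivial. -/
theorem H2_braidGroup_three_trivial : ∀ x : GroupH2 (BraidGroup 3), x = 1 := by
  intro x
  induction x using QuotientGroup.induction_on with
  | H w =>
    obtain ⟨w, hwN, hwC⟩ := w
    rw [QuotientGroup.eq_one_iff]
    change w ∈ ⁅(⊤ : Subgroup (FreeGroup (BraidGroup 3))), hopfN (BraidGroup 3)⁆
    set R := ⁅(⊤ : Subgroup (FreeGroup (BraidGroup 3))), hopfN (BraidGroup 3)⁆ with hR
    have hRN : R ≤ (hopfπ (BraidGroup 3)).ker := Subgroup.commutator_le_right _ (hopfN _)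
    let p : FreeGroup (BraidGroup 3) ⧸ R →* BraidGroup 3 :=
      QuotientGroup.lift R (hopfπ _) hRN
    have hsurj : Function.Surjective p := fun g ↦
      ⟨QuotientGroup.mk (FreeGroup.of g), by simp [p, hopfπ]⟩
    have hcen : p.ker ≤ Subgroup.center _ := by
      intro e he
      induction e using QuotientGroup.induction_on with
      | H n =>
        rw [Subgroup.mem_center_iff]
        intro g
        induction g using QuotientGroup.induction_on with
        | H u =>
          have hn : n ∈ hopfN (BraidGroup 3) := he
          have hmem : ⁅u, n⁆ ∈ R := Subgroup.commutator_mem_commutator (Subgroup.mem_top u) hn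
          have h1 := (QuotientGroup.eq_one_iff (N := R) _).mpr hmem
          exact commutatorElement_eq_one_iff_mul_comm.mp h1
    obtain ⟨s, hs⟩ := exists_section_braidGroup_three p hsurj hcen
    refine (QuotientGroup.eq_one_iff (N := R) w).mp
      (eq_one_of_central_section p hcen s hs hwN ?_)
    have hmap : (commutator _).map (QuotientGroup.mk' R) ≤ commutator _ := by
      rw [commutator_def, Subgroup.map_commutator]
      exact Subgroup.commutator_mono le_top le_top
    exact hmap (Subgroup.mem_map_of_mem _ hwC)
end

section
/- For n ≥ 4, the second group homology H₂(B_n) of the Artin braid group B_n with trivial integer coefficients is cyclic of order 2, i.e., isomorphic to ℤ/2ℤ. -/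
open scoped Matrix commutatorElement

/-! ### Commutators and braid lifts in central extensions -/

section CentralExtension

variable {E B : Type*} [Group E] [Group B] {p : E →* B}

/-- In a central extension, a commutator depends only on the images of its entries. -/
theorem commutator_eq_of_map_eq (hp : p.ker ≤ Subgroup.center E) {a b a' b' : E}
    (ha : p a' = p a) (hb : p b' = p b) : ⁅a', b'⁆ = ⁅a, b⁆ := by
  obtain ⟨z, hz, rfl⟩ : ∃ z ∈ Subgroup.center E, a' = a * z :=
    ⟨a⁻¹ * a', hp (by simp [MonoidHom.mem_ker, ha]), by group⟩
  obtain ⟨w, hw, rfl⟩ : ∃ w ∈ Subgroup.center E, b' = b * w :=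
    ⟨b⁻¹ * b', hp (by simp [MonoidHom.mem_ker, hb]), by group⟩
  rw [Subgroup.mem_center_iff] at hz hw
  simp only [commutatorElement_def, mul_inv_rev]
  rw [hz a, hw b]
  calc z * a * (w * b) * (z⁻¹ * a⁻¹) * (w⁻¹ * b⁻¹)
      = z * (a * w) * b * z⁻¹ * a⁻¹ * w⁻¹ * b⁻¹ := by group
    _ = w * z * a * (b * z⁻¹) * a⁻¹ * w⁻¹ * b⁻¹ := by rw [hw a, ← mul_assoc z w, hw z]; group
    _ = w * (z * a * (z⁻¹ * b)) * a⁻¹ * w⁻¹ * b⁻¹ := by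
        rw [show b * z⁻¹ = z⁻¹ * b by
          rw [eq_inv_mul_iff_mul_eq, ← mul_assoc, mul_inv_eq_iff_eq_mul, hz b]]
        group
    _ = w * (a * b * a⁻¹) * w⁻¹ * b⁻¹ := by rw [← hz a]; group
    _ = a * b * a⁻¹ * b⁻¹ := by rw [← hw]; group

/-- In a central extension, a commutator with trivial image is central; so conjugating, in the
base, the images of its two entries by the same element does not change it. -/
theorem commutator_eq_of_conj (hp : p.ker ≤ Subgroup.center E) {a b a' b' : E} (g : E)
    (hab : Commute (p a) (p b)) (ha : p g * p a = p a' * p g) (hb : p g * p b = p b' * p g) :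
    ⁅a', b'⁆ = ⁅a, b⁆ := by
  have hc : ⁅a, b⁆ ∈ Subgroup.center E := hp (by
    rw [MonoidHom.mem_ker, map_commutatorElement, commutatorElement_eq_one_iff_commute]
    exact hab)
  have h1 : ⁅a', b'⁆ = ⁅g * a * g⁻¹, g * b * g⁻¹⁆ :=
    commutator_eq_of_map_eq hp (by simp [ha]) (by simp [hb])
  rw [h1, ← conjugate_commutatorElement, Subgroup.mem_center_iff.1 hc g, mul_inv_cancel_right]

theorem normal_of_le_center {Z : Subgroup E} (hZ : Z ≤ Subgroup.center E) : Z.Normal where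
  conj_mem z hz g := by rwa [Subgroup.mem_center_iff.1 (hZ hz) g, mul_inv_cancel_right]

/-- A sequence satisfying the braid relations lifts through a central extension to a sequence
satisfying them exactly. Each `s (i + 1)` is defined as the conjugate of `s i` by `s i * t`, where
`t` is any lift of `σ (i + 1)`; this does not depend on `t`, as `t` is unique up to a central
factor. -/
theorem exists_braid_lift (hp : p.ker ≤ Subgroup.center E) (hs : Function.Surjective p)
    (m : ℕ) (σ : ℕ → B)
    (hσ : ∀ i, i + 1 < m → σ i * σ (i + 1) * σ i = σ (i + 1) * σ i * σ (i + 1)) :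
    ∃ s : ℕ → E, (∀ i < m, p (s i) = σ i) ∧
      ∀ i, i + 1 < m → s i * s (i + 1) * s i = s (i + 1) * s i * s (i + 1) := by
  choose t ht using fun i => hs (σ i)
  let s : ℕ → E := fun i => Nat.rec (t 0)
    (fun i x => x * t (i + 1) * x * (x * t (i + 1))⁻¹) i
  have hsucc (i : ℕ) : s (i + 1) = s i * t (i + 1) * s i * (s i * t (i + 1))⁻¹ := rfl
  have h1 (i : ℕ) : i < m → p (s i) = σ i := by
    induction i with
    | zero => intro _; exact ht 0
    | succ i ih =>
      intro hi
      rw [hsucc]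
      simp only [map_mul, map_inv, ih (by omega), ht]
      rw [hσ i hi]; group
  refine ⟨s, h1, fun i hi => ?_⟩
  obtain ⟨z, hz, h⟩ : ∃ z ∈ Subgroup.center E, s (i + 1) = t (i + 1) * z :=
    ⟨(t (i + 1))⁻¹ * s (i + 1),
      hp (by rw [MonoidHom.mem_ker, map_mul, map_inv, h1 _ hi, ht]; group), by group⟩
  rw [Subgroup.mem_center_iff] at hz
  have h2 : s (i + 1) * s i * t (i + 1) = s i * t (i + 1) * s i := by rw [hsucc]; group
  calc s i * s (i + 1) * s i = s i * t (i + 1) * (z * s i) := by rw [h]; group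
    _ = (s i * t (i + 1) * s i) * z := by rw [← hz]; group
    _ = s (i + 1) * s i * s (i + 1) := by rw [← h2]; conv_rhs => rw [h]
                                          rw [h]; group

end CentralExtension

/-! ### The Artin generators -/

theorem braidσ_comm {m : ℕ} (i j : Fin m) (h : (i : ℕ) + 2 ≤ j) :
    Commute (PresentedGroup.of (rels := braidRels m) i) (PresentedGroup.of j) := by
  have := PresentedGroup.one_of_mem (rels := braidRels m) ⟨i, j, .inl ⟨h, rfl⟩⟩
  rw [← commutatorElement_eq_one_iff_commute, commutatorElement_def]
  simp only [map_mul, map_inv] at this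
  exact this

theorem braidσ_braid {m : ℕ} (i j : Fin m) (h : (i : ℕ) + 1 = j) :
    (PresentedGroup.of (rels := braidRels m) i) * PresentedGroup.of j * PresentedGroup.of i =
      PresentedGroup.of j * PresentedGroup.of i * PresentedGroup.of j := by
  have := PresentedGroup.one_of_mem (rels := braidRels m) ⟨i, j, .inr ⟨h, rfl⟩⟩
  rw [← mul_inv_eq_one]
  simp only [map_mul, map_inv] at this
  simp only [mul_inv_rev, ← mul_assoc]
  exact this

/-- The Artin generators indexed (from `0`) by natural numbers; the value is `1` outside the
range `i < m`. -/
def artinGen (m i : ℕ) : PresentedGroup (braidRels m) :=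
  if h : i < m then PresentedGroup.of ⟨i, h⟩ else 1

theorem artinGen_of_lt {m i : ℕ} (h : i < m) : artinGen m i = PresentedGroup.of ⟨i, h⟩ :=
  dif_pos h

theorem artinGen_comm {m i j : ℕ} (h : i + 2 ≤ j) : Commute (artinGen m i) (artinGen m j) := by
  by_cases hj : j < m
  · rw [artinGen_of_lt hj, artinGen_of_lt (by omega : i < m)]
    exact braidσ_comm _ _ h
  · simp [artinGen, hj]

theorem artinGen_braid {m i : ℕ} (h : i + 1 < m) :
    artinGen m i * artinGen m (i + 1) * artinGen m i =
      artinGen m (i + 1) * artinGen m i * artinGen m (i + 1) := by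
  rw [artinGen_of_lt h, artinGen_of_lt (by omega : i < m)]
  exact braidσ_braid _ _ rfl

/-! ### The upper bound -/

section Upper

variable {E : Type*} [Group E] {m : ℕ} {p : E →* PresentedGroup (braidRels m)}

/-- All commutators of lifts of distant Artin generators are equal: conjugation by `σ_j σ_{j+1}`
carries `σ_j` to `σ_{j+1}` and fixes every generator distant from both. -/
theorem lift_commutator_eq (hp : p.ker ≤ Subgroup.center E) {s : ℕ → E}
    (hs : ∀ i < m, p (s i) = artinGen m i) {i j : ℕ} (hij : i + 2 ≤ j) (hj : j < m) :
    ⁅s i, s j⁆ = ⁅s 0, s 2⁆ := by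
  have hcol (j : ℕ) (h2 : 2 ≤ j) : j < m → ⁅s 0, s j⁆ = ⁅s 0, s 2⁆ := by
    induction j, h2 using Nat.le_induction with
    | base => intro _; rfl
    | succ j h2 ih =>
      intro hj
      rw [← ih (by omega)]
      refine commutator_eq_of_conj hp (s j * s (j + 1)) ?_ ?_ ?_ <;>
        simp only [map_mul, hs 0 (by omega), hs j (by omega), hs (j + 1) hj]
      · exact artinGen_comm h2
      · exact ((artinGen_comm (by omega)).mul_right (artinGen_comm (by omega))).eq.symm
      · rw [artinGen_braid hj, mul_assoc]
  have hrow (i : ℕ) : i + 2 ≤ j → ⁅s i, s j⁆ = ⁅s 0, s j⁆ := by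
    induction i with
    | zero => intro _; rfl
    | succ i ih =>
      intro hi
      rw [← ih (by omega)]
      refine commutator_eq_of_conj hp (s i * s (i + 1)) ?_ ?_ ?_ <;>
        simp only [map_mul, hs i (by omega), hs j (by omega), hs (i + 1) (by omega)]
      · exact artinGen_comm (by omega)
      · rw [artinGen_braid (by omega), mul_assoc]
      · exact ((artinGen_comm (by omega)).mul_left (artinGen_comm (by omega))).eq
  rw [hrow i hij, hcol j (by omega) hj]

/-- The common commutator has order at most two, because conjugation by the block swap
`σ₂σ₁σ₃σ₂` exchanges `σ₁` and `σ₃`. -/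
theorem lift_commutator_inv (hp : p.ker ≤ Subgroup.center E) {s : ℕ → E} (hm : 3 ≤ m)
    (hs : ∀ i < m, p (s i) = artinGen m i) : ⁅s 0, s 2⁆⁻¹ = ⁅s 0, s 2⁆ := by
  rw [commutatorElement_inv]
  have h01 := artinGen_braid (m := m) (i := 0) (by omega)
  have h12 := artinGen_braid (m := m) (i := 1) (by omega)
  have h02 := (artinGen_comm (m := m) (i := 0) (j := 2) le_rfl).eq
  simp only [zero_add, Nat.reduceAdd] at h01 h12
  refine commutator_eq_of_conj hp (s 1 * s 0 * s 2 * s 1) ?_ ?_ ?_ <;>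
    simp only [map_mul, hs 0 (by omega), hs 1 (by omega), hs 2 (by omega)]
  · exact h02
  · generalize artinGen m 0 = a at *
    generalize artinGen m 1 = b at *
    generalize artinGen m 2 = c at *
    calc b * a * c * b * a = b * (a * c) * b * a := by group
      _ = b * c * (a * b * a) := by rw [h02]; group
      _ = (b * c * b) * a * b := by rw [h01]; group
      _ = c * b * (c * a) * b := by rw [h12]; group
      _ = c * (b * a * c * b) := by rw [← h02]; group
  · generalize artinGen m 0 = a at *
    generalize artinGen m 1 = b at *
    generalize artinGen m 2 = c at *
    calc b * a * c * b * c = b * a * (c * b * c) := by group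
      _ = (b * a * b) * c * b := by rw [← h12]; group
      _ = a * b * (a * c) * b := by rw [← h01]; group
      _ = a * (b * a * c * b) := by group

/-- In a central extension of the braid group, the part of the kernel lying in the derived
subgroup consists of powers of the common commutator of lifts of distant generators. -/
theorem mem_zpowers_of_mem_commutator (hp : p.ker ≤ Subgroup.center E)
    (hm : 3 ≤ m) {s : ℕ → E}
    (hs : ∀ i < m, p (s i) = artinGen m i)
    (hbr : ∀ i, i + 1 < m → s i * s (i + 1) * s i = s (i + 1) * s i * s (i + 1))
    {e : E} (he : e ∈ commutator E) (hpe : p e = 1) : e ∈ Subgroup.zpowers ⁅s 0, s 2⁆ := by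
  set c := ⁅s 0, s 2⁆ with hc
  have hcc : c ∈ Subgroup.center E := hp (by
    rw [MonoidHom.mem_ker, map_commutatorElement, commutatorElement_eq_one_iff_commute,
      hs 0 (by omega), hs 2 (by omega)]
    exact artinGen_comm le_rfl)
  have hC : Subgroup.zpowers c ≤ Subgroup.center E := by simpa using hcc
  have : (Subgroup.zpowers c).Normal := normal_of_le_center hC
  let q := QuotientGroup.mk' (Subgroup.zpowers c)
  have hrel : ∀ r ∈ braidRels m, FreeGroup.lift (fun i : Fin m => q (s i)) r = 1 := by
    rintro r ⟨i, j, ⟨hij, rfl⟩ | ⟨hij, rfl⟩⟩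
    · simp only [map_mul, map_inv, FreeGroup.lift_apply_of]
      rw [← commutatorElement_def, ← map_commutatorElement, lift_commutator_eq hp hs hij j.2]
      exact (QuotientGroup.eq_one_iff _).2 (Subgroup.mem_zpowers c)
    · simp only [map_mul, map_inv, FreeGroup.lift_apply_of]
      have := hbr i (by omega)
      rw [← hij, ← map_mul, ← map_mul, this]
      simp only [map_mul]; group
  -- The presentation of `B_n` gives a section modulo `c`, inverse to `p` on the subgroup `E'`.
  let r : PresentedGroup (braidRels m) →* E ⧸ Subgroup.zpowers c := PresentedGroup.toGroup hrel
  let E' : Subgroup E := Subgroup.closure (Set.range fun i : Fin m => s i)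
  have hrq : ∀ x ∈ E', r (p x) = q x := by
    have : E' ≤ (r.comp p).eqLocus q := by
      rw [Subgroup.closure_le]
      rintro _ ⟨i, rfl⟩
      change r (p (s i)) = q (s i)
      rw [hs i i.2, artinGen_of_lt i.2]
      exact PresentedGroup.toGroup.of hrel
    exact this
  have hmap : E'.map p = ⊤ := by
    rw [MonoidHom.map_closure, eq_top_iff, ← PresentedGroup.closure_range_of, Subgroup.closure_le]
    rintro _ ⟨i, rfl⟩
    exact Subgroup.subset_closure ⟨s i, ⟨i, rfl⟩, by rw [hs i i.2, artinGen_of_lt i.2]⟩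
  -- `E` is generated by `E'` together with central elements, which commutators ignore.
  have hcomm : commutator E ≤ E' := by
    rw [commutator_def, Subgroup.commutator_le]
    intro x _ y _
    obtain ⟨x', hx', hx⟩ : p x ∈ E'.map p := hmap ▸ Subgroup.mem_top _
    obtain ⟨y', hy', hy⟩ : p y ∈ E'.map p := hmap ▸ Subgroup.mem_top _
    rw [← commutator_eq_of_map_eq hp hx hy, commutatorElement_def]
    exact E'.mul_mem (E'.mul_mem (E'.mul_mem hx' hy') (E'.inv_mem hx')) (E'.inv_mem hy')
  have h := hrq e (hcomm he)
  rw [hpe, map_one] at h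
  exact (QuotientGroup.eq_one_iff e).1 h.symm

end Upper

/-! ### The lower bound: root vectors in a Clifford algebra -/

section Clifford

variable (n : ℕ)

/-- The quadratic form `v ↦ ∑ vᵢ²` on `ℚⁿ`. -/
abbrev stdForm : QuadraticForm ℚ (Fin n → ℚ) :=
  LinearMap.BilinMap.toQuadraticMap (dotProductBilin ℚ ℚ)

/-- The root vector `e_i - e_{i+1}` of `ℚⁿ`, with `e_k = 0` for `k ≥ n`. -/
def rootVec (i : ℕ) : Fin n → ℚ := fun k =>
  (if (k : ℕ) = i then 1 else 0) - (if (k : ℕ) = i + 1 then 1 else 0)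

variable {n}

theorem dot_rootVec (i : ℕ) (hi : i + 1 < n) (v : Fin n → ℚ) :
    rootVec n i ⬝ᵥ v = v ⟨i, by omega⟩ - v ⟨i + 1, hi⟩ := by
  have h : rootVec n i = Pi.single ⟨i, by omega⟩ 1 - Pi.single ⟨i + 1, hi⟩ 1 := by
    ext k
    simp [rootVec, Pi.single_apply, Fin.ext_iff]
  simp [h, sub_dotProduct]

open CliffordAlgebra in
theorem ι_rootVec_sq (i : ℕ) (hi : i + 1 < n) :
    ι (stdForm n) (rootVec n i) * ι (stdForm n) (rootVec n i) = 2 := by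
  rw [ι_sq_scalar, LinearMap.BilinMap.toQuadraticMap_apply, dotProductBilin_apply_apply,
    dot_rootVec i hi, ← map_ofNat (algebraMap ℚ (CliffordAlgebra (stdForm n))) 2]
  congr 1
  simp only [rootVec]
  norm_num

open CliffordAlgebra in
theorem ι_rootVec_anticomm (i j : ℕ) (hij : i + 2 ≤ j) (hj : j + 1 < n) :
    ι (stdForm n) (rootVec n i) * ι (stdForm n) (rootVec n j) =
     - (ι (stdForm n) (rootVec n j) * ι (stdForm n) (rootVec n i)) := by
  rw [eq_neg_iff_add_eq_zero, ι_mul_ι_add_swap, LinearMap.BilinMap.polar_toQuadraticMap,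
    dotProductBilin_apply_apply, dotProductBilin_apply_apply, dotProduct_comm (rootVec n j),
    dot_rootVec i (by omega)]
  have h1 : i ≠ j := by omega
  have h2 : i + 1 ≠ j := by omega
  have h3 : i ≠ j + 1 := by omega
  simp [rootVec, h1, h2, h3]

open CliffordAlgebra in
theorem ι_rootVec_braid (i : ℕ) (hi : i + 2 < n) :
    ι (stdForm n) (rootVec n i) * ι (stdForm n) (rootVec n (i + 1)) *
        ι (stdForm n) (rootVec n i) =
      ι (stdForm n) (rootVec n (i + 1)) * ι (stdForm n) (rootVec n i) *
        ι (stdForm n) (rootVec n (i + 1)) := by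
  have h : ι (stdForm n) (rootVec n i) * ι (stdForm n) (rootVec n (i + 1)) +
      ι (stdForm n) (rootVec n (i + 1)) * ι (stdForm n) (rootVec n i) = -2 := by
    rw [ι_mul_ι_add_swap, LinearMap.BilinMap.polar_toQuadraticMap,
      dotProductBilin_apply_apply, dotProductBilin_apply_apply, dotProduct_comm (rootVec n (i + 1)),
      dot_rootVec i (by omega)]
    have h3 : i ≠ i + 1 + 1 := by omega
    rw [← map_ofNat (algebraMap ℚ (CliffordAlgebra (stdForm n))) 2, ← map_neg]
    congr 1
    simp only [rootVec, if_neg h3]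
    norm_num
  have ha := ι_rootVec_sq (n := n) i (by omega)
  have hb := ι_rootVec_sq (n := n) (i + 1) (by omega)
  generalize ι (stdForm n) (rootVec n i) = a at *
  generalize ι (stdForm n) (rootVec n (i + 1)) = b at *
  rw [eq_sub_of_add_eq h, sub_mul, mul_assoc b, ha, eq_sub_of_add_eq' h, sub_mul, mul_assoc a, hb]
  noncomm_ring

variable (n) in
/-- The root vector `e_i - e_{i+1}` as a unit of the Clifford algebra; its square is `2`. -/
noncomputable def rootUnit (i : ℕ) (hi : i + 1 < n) : (CliffordAlgebra (stdForm n))ˣ where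
  val := CliffordAlgebra.ι (stdForm n) (rootVec n i)
  inv := (2⁻¹ : ℚ) • CliffordAlgebra.ι (stdForm n) (rootVec n i)
  val_inv := by
    rw [mul_smul_comm, ι_rootVec_sq i hi, Algebra.smul_def, ← map_ofNat (algebraMap ℚ (CliffordAlgebra (stdForm n))) 2, ← map_mul]
    norm_num
  inv_val := by
    rw [smul_mul_assoc, ι_rootVec_sq i hi, Algebra.smul_def, ← map_ofNat (algebraMap ℚ (CliffordAlgebra (stdForm n))) 2, ← map_mul]
    norm_num

theorem rootUnit_commutator (i j : ℕ) (hij : i + 2 ≤ j) (hj : j + 1 < n) :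
    ⁅rootUnit n i (by omega), rootUnit n j hj⁆ = -1 := by
  rw [commutatorElement_def, mul_inv_eq_iff_eq_mul, mul_inv_eq_iff_eq_mul]
  ext
  simpa [rootUnit] using ι_rootVec_anticomm i j hij hj

theorem rootUnit_braid (i : ℕ) (hi : i + 1 + 1 < n) :
    rootUnit n i (by omega) * rootUnit n (i + 1) hi * rootUnit n i (by omega) =
      rootUnit n (i + 1) hi * rootUnit n i (by omega) * rootUnit n (i + 1) hi := by
  ext
  exact ι_rootVec_braid i hi

theorem neg_one_mem_center {R : Type*} [Ring R] : (-1 : Rˣ) ∈ Subgroup.center Rˣ := by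
  rw [Subgroup.mem_center_iff]; intro g; simp

theorem neg_one_ne_one_units : (-1 : (CliffordAlgebra (stdForm n))ˣ) ≠ 1 := by
  intro h
  have h1 : (-1 : CliffordAlgebra (stdForm n)) = 1 := congrArg Units.val h
  have h2 : algebraMap ℚ (CliffordAlgebra (stdForm n)) (-1) = algebraMap ℚ _ 1 := by simpa using h1
  have := (algebraMap ℚ (CliffordAlgebra (stdForm n))).injective h2
  norm_num at this

end Clifford

theorem hopfπ_of {G : Type*} [Group G] (g : G) : hopfπ G (FreeGroup.of g) = g :=
  FreeGroup.lift_apply_of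

/-- A homomorphism on the free group which is central on the relation subgroup `hopfN`, so trivial
on `[F, N]`, but which does not kill the commutator of two distant Artin generators. -/
theorem exists_central_lift (n : ℕ) (hn : 4 ≤ n) :
    ∃ (U : Type) (_ : Group U) (ψ : FreeGroup (BraidGroup n) →* U),
      (hopfN (BraidGroup n)).map ψ ≤ Subgroup.center U ∧
      ψ ⁅FreeGroup.of (artinGen (n - 1) 0), FreeGroup.of (artinGen (n - 1) 2)⁆ ≠ 1 := by
  let U := (CliffordAlgebra (stdForm n))ˣ
  let Z : Subgroup U := Subgroup.zpowers (-1)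
  have hZ : Z ≤ Subgroup.center U := by simpa [Z] using neg_one_mem_center
  have : Z.Normal := normal_of_le_center hZ
  let q : U →* U ⧸ Z := QuotientGroup.mk' Z
  have hrel : ∀ r ∈ braidRels (n - 1),
      FreeGroup.lift (fun i : Fin (n - 1) => q (rootUnit n i (by omega))) r = 1 := by
    rintro r ⟨i, j, ⟨hij, rfl⟩ | ⟨hij, rfl⟩⟩
    · simp only [map_mul, map_inv, FreeGroup.lift_apply_of]
      rw [← commutatorElement_def, ← map_commutatorElement, rootUnit_commutator _ _ hij]
      exact (QuotientGroup.eq_one_iff _).2 (Subgroup.mem_zpowers _)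
    · simp only [map_mul, map_inv, FreeGroup.lift_apply_of]
      have := rootUnit_braid (n := n) i (by omega)
      simp only [← hij]
      rw [← map_mul, ← map_mul, this]
      simp only [map_mul]; group
  let ρ : BraidGroup n →* U ⧸ Z := PresentedGroup.toGroup hrel
  choose t ht using fun g => QuotientGroup.mk'_surjective Z (ρ g)
  let ψ : FreeGroup (BraidGroup n) →* U := FreeGroup.lift t
  have hψ : q.comp ψ = ρ.comp (hopfπ (BraidGroup n)) := by
    ext g
    change q (ψ (FreeGroup.of g)) = ρ (hopfπ _ (FreeGroup.of g))
    rw [hopfπ_of, FreeGroup.lift_apply_of]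
    exact ht g
  have hρ (i : ℕ) (hi : i + 1 < n) : ρ (artinGen (n - 1) i) = q (rootUnit n i hi) := by
    rw [artinGen_of_lt (by omega)]
    exact PresentedGroup.toGroup.of hrel
  refine ⟨U, inferInstance, ψ, ?_, ?_⟩
  · rintro _ ⟨x, hx, rfl⟩
    refine hZ ((QuotientGroup.eq_one_iff _).1 ?_)
    have := DFunLike.congr_fun hψ x
    have hx' : hopfπ (BraidGroup n) x = 1 := hx
    rw [MonoidHom.comp_apply, MonoidHom.comp_apply, hx', map_one] at this
    exact this
  · have hker : q.ker ≤ Subgroup.center U := by rwa [QuotientGroup.ker_mk']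
    rw [map_commutatorElement, commutator_eq_of_map_eq hker (a := rootUnit n 0 (by omega))
      (b := rootUnit n 2 (by omega)), rootUnit_commutator 0 2 (by omega)]
    · exact neg_one_ne_one_units
    · rw [← hρ, FreeGroup.lift_apply_of]; exact ht _
    · rw [← hρ, FreeGroup.lift_apply_of]; exact ht _

/-- For `n ≥ 4`, the second homology group of the braid group `B_n` is cyclic of
order `2`. -/
theorem H2_braidGroup_eq_zmod_two (n : ℕ) (hn : 4 ≤ n) :
    Nonempty (GroupH2 (BraidGroup n) ≃* Multiplicative (ZMod 2)) := by
  set B := BraidGroup n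
  set F := FreeGroup B
  let K : Subgroup F := ⁅(⊤ : Subgroup F), hopfN B⁆
  have hKN : K ≤ hopfN B := Subgroup.commutator_le_right _ _
  -- The central extension `F / [F, N] → B_n`.
  let p : F ⧸ K →* B := QuotientGroup.lift K (hopfπ B) hKN
  have hp : p.ker ≤ Subgroup.center (F ⧸ K) := by
    intro x hx
    obtain ⟨x, rfl⟩ := QuotientGroup.mk_surjective x
    rw [Subgroup.mem_center_iff]
    intro g
    obtain ⟨g, rfl⟩ := QuotientGroup.mk_surjective g
    have : ⁅g, x⁆ ∈ K := Subgroup.commutator_mem_commutator (Subgroup.mem_top g) hx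
    have h1 : ⁅(g : F ⧸ K), (x : F ⧸ K)⁆ = 1 := (QuotientGroup.eq_one_iff _).2 this
    exact commutatorElement_eq_one_iff_mul_comm.1 h1
  have hsurj : Function.Surjective p := fun b =>
    ⟨((FreeGroup.of b : F) : F ⧸ K), hopfπ_of b⟩
  obtain ⟨s, hs, hbr⟩ := exists_braid_lift hp hsurj (n - 1) (artinGen (n - 1))
    fun i hi => artinGen_braid hi
  let c₀ : F := ⁅FreeGroup.of (artinGen (n - 1) 0), FreeGroup.of (artinGen (n - 1) 2)⁆
  have hc₀ : c₀ ∈ hopfTop B := by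
    refine ⟨?_, Subgroup.commutator_mem_commutator (Subgroup.mem_top _) (Subgroup.mem_top _)⟩
    change hopfπ B c₀ = 1
    rw [map_commutatorElement, commutatorElement_eq_one_iff_commute]
    rw [hopfπ_of, hopfπ_of]
    exact artinGen_comm (m := n - 1) (i := 0) (j := 2) le_rfl
  have hc : (c₀ : F ⧸ K) = ⁅s 0, s 2⁆ := by
    change QuotientGroup.mk' K c₀ = _
    rw [map_commutatorElement]
    refine commutator_eq_of_map_eq hp ?_ ?_
    · rw [hs 0 (by omega)]; exact hopfπ_of _
    · rw [hs 2 (by omega)]; exact hopfπ_of _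
  let x : GroupH2 B := QuotientGroup.mk ⟨c₀, hc₀⟩
  -- Membership in `[F, N]` decides equality in `H₂`.
  have hone (y : hopfTop B) : (y : GroupH2 B) = 1 ↔ ((y : F) : F ⧸ K) = 1 := by
    rw [QuotientGroup.eq_one_iff, QuotientGroup.eq_one_iff]; rfl
  have hx2 : x ^ 2 = 1 := by
    refine (hone (⟨c₀, hc₀⟩ ^ 2)).2 ?_
    have := lift_commutator_inv hp (by omega) hs
    rw [← hc] at this
    push_cast
    rw [QuotientGroup.mk_pow, pow_two, ← inv_eq_iff_mul_eq_one, this]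
  have hx1 : x ≠ 1 := by
    intro h
    have h1 : c₀ ∈ K := (QuotientGroup.eq_one_iff _).1 ((hone ⟨c₀, hc₀⟩).1 h)
    obtain ⟨U, _, ψ, hψ, hne⟩ := exists_central_lift n hn
    have hK : K ≤ ψ.ker := by
      refine Subgroup.commutator_le.2 fun g _ y hy => ?_
      rw [MonoidHom.mem_ker, map_commutatorElement, commutatorElement_eq_one_iff_mul_comm]
      exact Subgroup.mem_center_iff.1 (hψ ⟨y, hy, rfl⟩) _
    exact hne (hK h1)
  have hgen (y : GroupH2 B) : y ∈ Subgroup.zpowers x := by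
    obtain ⟨y, rfl⟩ := QuotientGroup.mk_surjective y
    have hy : ((y : F) : F ⧸ K) ∈ commutator (F ⧸ K) := by
      have h1 : QuotientGroup.mk' K y ∈ (commutator F).map (QuotientGroup.mk' K) :=
        ⟨y, y.2.2, rfl⟩
      rw [commutator_def, Subgroup.map_commutator] at h1
      exact Subgroup.commutator_mono le_top le_top h1
    obtain ⟨k, hk⟩ := mem_zpowers_of_mem_commutator hp (by omega) hs hbr hy y.2.1
    refine ⟨k, ?_⟩
    change x ^ k = _
    rw [← mul_inv_eq_one]
    refine (hone (⟨c₀, hc₀⟩ ^ k * y⁻¹)).2 ?_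
    push_cast
    rw [QuotientGroup.mk_mul, QuotientGroup.mk_zpow, QuotientGroup.mk_inv, hc, mul_inv_eq_one]
    exact hk
  have : Fact (Nat.Prime 2) := ⟨Nat.prime_two⟩
  have hcard : Nat.card (GroupH2 B) = 2 := by
    rw [← orderOf_eq_card_of_forall_mem_zpowers hgen, orderOf_eq_prime hx2 hx1]
  exact ⟨mulEquivOfPrimeCardEq (p := 2) hcard (by simp)⟩
end

section
/- For n ≥ 4, let ∂ : C_n → B_n be the free crossed module over the Artin braid group B_n on the single-element subset {σ_1}, with distinguished generator x = φ(σ_1) ∈ C_n. Then the element t = (σ_3 • x)·x⁻¹ of C_n has order 2, and the kernel of ∂ is the cyclic subgroup of C_n generated by t. -/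
namespace BraidCM

open CliffordAlgebra
open scoped commutatorElement

universe u v w

/-! ### Crossed modules -/

section General

variable {C : Type u} {G : Type v} [Group C] [Group G] (M : CrossedModule C G)


theorem ker_comm {a : C} (ha : M.map a = 1) (b : C) : a * b = b * a := by
  have h := M.peiffer a b
  rw [ha, map_one, MulAut.one_apply, eq_mul_inv_iff_mul_eq] at h
  exact h.symm

/-- Since `ker ∂` is central, a commutator depends only on the images of its entries. -/
theorem commutator_congr {a a' b b' : C} (ha : M.map a = M.map a') (hb : M.map b = M.map b') :
    ⁅a, b⁆ = ⁅a', b'⁆ := by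
  have key : ∀ {p p' : C} (q : C), M.map p = M.map p' → ⁅p, q⁆ = ⁅p', q⁆ := by
    intro p p' q h
    rw [commutatorElement_def, commutatorElement_def, ← M.peiffer p q, ← M.peiffer p' q, h]
  rw [key b ha, ← commutatorElement_inv b a', key a' hb, commutatorElement_inv]

/-- A commutator in the kernel of `∂` is invariant under simultaneous conjugation of the images
of its entries, because `∂` is surjective and its kernel is central. -/
theorem commutator_conj (hs : Function.Surjective M.map) {a a' b b' : C} (g : G)
    (ha : g * M.map a = M.map a' * g) (hb : g * M.map b = M.map b' * g)
    (hab : M.map ⁅a, b⁆ = 1) : ⁅a, b⁆ = ⁅a', b'⁆ := by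
  obtain ⟨c, rfl⟩ := hs g
  have h1 : M.act (M.map c) ⁅a, b⁆ = ⁅a, b⁆ := by
    rw [M.peiffer, ← ker_comm M hab c]; group
  rw [← h1, map_commutatorElement]
  apply commutator_congr M
  · rw [M.map_act, ha]; group
  · rw [M.map_act, hb]; group

end General

/-- The inner crossed module `D → Aut D`, transported to arbitrary universes. -/
def innerCM (D : Type) [Group D] :
    CrossedModule (ULift.{u} D) (ULift.{v} (MulAut D)) where
  map := MulEquiv.ulift.symm.toMonoidHom.comp (MulAut.conj.comp MulEquiv.ulift.toMonoidHom)
  act := (MulAut.congr (MulEquiv.ulift.symm : D ≃* ULift.{u} D)).toMonoidHom.comp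
    MulEquiv.ulift.toMonoidHom
  map_act g c := by
    apply ULift.down_injective
    ext d
    change g.down (c.down) * d * (g.down c.down)⁻¹ =
      g.down (c.down * (g.down⁻¹ d) * c.down⁻¹)
    simp
  peiffer a b := by
    apply ULift.down_injective
    simp [MulAut.congr]

/-- An abelian group as a crossed module over the trivial group, transported to arbitrary
universes. -/
def abelianCM (A : Type) [CommGroup A] :
    CrossedModule (ULift.{u} A) PUnit.{v + 1} where
  map := 1
  act := 1
  map_act _ _ := rfl
  peiffer a b := by simp

/-! ### Braid relations -/

theorem braid_comm {n : ℕ} (i j : Fin (n - 1)) (h : (i : ℕ) + 2 ≤ j) :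
    (braidσ i : BraidGroup n) * braidσ j = braidσ j * braidσ i := by
  have hr := PresentedGroup.one_of_mem (rels := braidRels (n - 1)) ⟨i, j, Or.inl ⟨h, rfl⟩⟩
  simp only [map_mul, map_inv] at hr
  rw [mul_inv_eq_one, mul_inv_eq_iff_eq_mul] at hr
  exact hr

theorem braid_braid {n : ℕ} (i j : Fin (n - 1)) (h : (i : ℕ) + 1 = j) :
    (braidσ i : BraidGroup n) * braidσ j * braidσ i = braidσ j * braidσ i * braidσ j := by
  have hr := PresentedGroup.one_of_mem (rels := braidRels (n - 1)) ⟨i, j, Or.inr ⟨h, rfl⟩⟩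
  simp only [map_mul, map_inv] at hr
  rw [mul_inv_eq_one, mul_inv_eq_iff_eq_mul, mul_inv_eq_iff_eq_mul] at hr
  exact hr

/-- Elements satisfying the braid relations define a homomorphism from the braid group. -/
theorem exists_braidHom {n : ℕ} {D : Type u} [Group D] (d : Fin (n - 1) → D)
    (hc : ∀ i j : Fin (n - 1), (i : ℕ) + 2 ≤ j → d i * d j = d j * d i)
    (hb : ∀ i j : Fin (n - 1), (i : ℕ) + 1 = j → d i * d j * d i = d j * d i * d j) :
    ∃ f : BraidGroup n →* D, ∀ i, f (braidσ i) = d i := by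
  have h : ∀ r ∈ braidRels (n - 1), FreeGroup.lift d r = 1 := by
    rintro r ⟨i, j, ⟨h, rfl⟩ | ⟨h, rfl⟩⟩
    · simp [hc i j h]
    · simp [hb i j h]
  exact ⟨PresentedGroup.toGroup h, fun i => PresentedGroup.toGroup.of h⟩

/-- The Artin generators indexed by all natural numbers, with value `1` outside the range. -/
def s (n i : ℕ) : BraidGroup n := if h : i < n - 1 then braidσ ⟨i, h⟩ else 1

theorem s_of_lt {n i : ℕ} (h : i < n - 1) : s n i = braidσ ⟨i, h⟩ := dif_pos h

theorem s_comm (n : ℕ) {i j : ℕ} (h : i + 2 ≤ j) : s n i * s n j = s n j * s n i := by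
  by_cases hj : j < n - 1
  · rw [s_of_lt hj, s_of_lt (show i < n - 1 by omega)]
    exact braid_comm _ _ h
  · simp [s, hj]

theorem s_comm' (n : ℕ) {i j : ℕ} (h : i + 2 ≤ j ∨ j + 2 ≤ i) :
    s n i * s n j = s n j * s n i :=
  h.elim (s_comm n) fun h => (s_comm n h).symm

theorem s_braid {n i : ℕ} (h : i + 1 < n - 1) :
    s n i * s n (i + 1) * s n i = s n (i + 1) * s n i * s n (i + 1) := by
  rw [s_of_lt h, s_of_lt (show i < n - 1 by omega)]
  exact braid_braid _ _ rfl

/-- Conjugation by `s i * s (i + 1)` moves `s i` to `s (i + 1)`. -/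
theorem s_shift {n i : ℕ} (h : i + 1 < n - 1) :
    s n i * s n (i + 1) * s n i = s n (i + 1) * (s n i * s n (i + 1)) := by
  rw [s_braid h, mul_assoc]

theorem s_shift_fix {n i j : ℕ} (h : i + 2 ≤ j ∨ j + 2 ≤ i) (h' : i + 3 ≤ j ∨ j + 1 ≤ i) :
    s n i * s n (i + 1) * s n j = s n j * (s n i * s n (i + 1)) := by
  rw [mul_assoc, s_comm' n (i := i + 1) (j := j) (by omega), ← mul_assoc, s_comm' n h, mul_assoc]

/-- The element `s 1 * s 0 * s 2 * s 1` interchanges `s 0` and `s 2` under conjugation. -/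
theorem s_swap {n : ℕ} (hn : 4 ≤ n) :
    s n 1 * s n 0 * s n 2 * s n 1 * s n 0 = s n 2 * (s n 1 * s n 0 * s n 2 * s n 1) ∧
    s n 1 * s n 0 * s n 2 * s n 1 * s n 2 = s n 0 * (s n 1 * s n 0 * s n 2 * s n 1) := by
  have h02 := s_comm n (i := 0) (j := 2) (by omega)
  have h01 := s_braid (n := n) (i := 0) (by omega)
  have h12 := s_braid (n := n) (i := 1) (by omega)
  norm_num at h01 h12
  generalize s n 0 = a at *
  generalize s n 1 = b at *
  generalize s n 2 = c at *
  constructor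
  · calc b * a * c * b * a = b * (a * c) * b * a := by group
      _ = b * c * (a * b * a) := by rw [h02]; group
      _ = (b * c * b) * a * b := by rw [h01]; group
      _ = c * b * (c * a) * b := by rw [h12]; group
      _ = _ := by rw [← h02]; group
  · calc b * a * c * b * c = b * a * (c * b * c) := by group
      _ = (b * a * b) * c * b := by rw [← h12]; group
      _ = _ := by rw [← h01]; group

/-- Induction over the generators: the braid group is the normal closure of `σ_1`. -/
theorem eq_top_of_normal {n : ℕ} (H : Subgroup (BraidGroup n)) [hH : H.Normal]
    (h0 : s n 0 ∈ H) : H = ⊤ := by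
  have h : ∀ i, i < n - 1 → s n i ∈ H := by
    intro i
    induction i with
    | zero => exact fun _ => h0
    | succ i ih =>
      intro hi
      have := hH.conj_mem _ (ih (by omega)) (s n i * s n (i + 1))
      rwa [s_shift hi, mul_inv_cancel_right] at this
  rw [eq_top_iff, ← PresentedGroup.closure_range_of, Subgroup.closure_le]
  rintro _ ⟨i, rfl⟩
  have := h i i.2
  rwa [s_of_lt i.2] at this

/-! ### A Clifford algebra test object -/

section Clifford

/-- The Gram matrix of the simple roots of type `A_m`. -/
def gram (m : ℕ) : Matrix (Fin m) (Fin m) ℝ := fun i j =>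
  if i = j then 2 else if (i : ℕ) + 1 = j ∨ (j : ℕ) + 1 = i then -1 else 0

/-- The quadratic form with Gram matrix `gram m`. -/
noncomputable def form (m : ℕ) : QuadraticForm ℝ (Fin m → ℝ) :=
  LinearMap.BilinMap.toQuadraticMap (Matrix.toBilin' (gram m))

/-- The generator of the Clifford algebra given by the `i`-th simple root. -/
noncomputable def root {m : ℕ} (i : Fin m) : CliffordAlgebra (form m) :=
  ι (form m) (Pi.single i 1)

theorem root_sq {m : ℕ} (i : Fin m) : root i * root i = 2 := by
  rw [root, ι_sq_scalar, form, LinearMap.BilinMap.toQuadraticMap_apply,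
    Matrix.toBilin'_single]
  simp only [gram, if_true]
  exact map_ofNat _ 2

theorem root_add_swap {m : ℕ} (i j : Fin m) :
    root i * root j + root j * root i =
      algebraMap ℝ (CliffordAlgebra (form m)) (gram m i j + gram m j i) := by
  rw [root, root, ι_mul_ι_add_swap, form, LinearMap.BilinMap.polar_toQuadraticMap,
    Matrix.toBilin'_single, Matrix.toBilin'_single]

theorem root_anticomm {m : ℕ} (i j : Fin m) (h : (i : ℕ) + 2 ≤ j) :
    root i * root j = -(root j * root i) := by
  rw [eq_neg_iff_add_eq_zero, root_add_swap]
  have h1 : i ≠ j := by rintro rfl; omega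
  have h2 : ¬ ((i : ℕ) + 1 = j ∨ (j : ℕ) + 1 = i) := by omega
  have h3 : ¬ ((j : ℕ) + 1 = i ∨ (i : ℕ) + 1 = j) := by omega
  simp [gram, h1, h1.symm, h2, h3]

theorem root_braid {m : ℕ} (i j : Fin m) (h : (i : ℕ) + 1 = j) :
    root i * root j * root i = root j * root i * root j := by
  have h1 : i ≠ j := by rintro rfl; omega
  have h2 : root i * root j + root j * root i = -2 := by
    rw [root_add_swap]
    simp only [gram, h1, h1.symm, h, if_false, true_or, or_true, if_true]
    rw [show (-1 + -1 : ℝ) = -2 by norm_num, map_neg, map_ofNat]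
  have hi := root_sq i
  have hj := root_sq j
  -- both sides equal `-2 (root i + root j)`
  calc root i * root j * root i
      = (root i * root j + root j * root i) * root i - root j * (root i * root i) := by
        noncomm_ring
    _ = root i * (-2) - (root j * root j) * root i - root j * 2 - root i * (-2)
          + (-2) * root i + 2 * root i := by
        rw [h2, hi, hj]; noncomm_ring
    _ = (root i * root j + root j * root i) * root j - root i * (root j * root j) := by
        rw [h2, hj]; noncomm_ring
    _ = _ := by noncomm_ring

/-- The simple roots as units of the Clifford algebra. -/
noncomputable def rootUnit {m : ℕ} (i : Fin m) : (CliffordAlgebra (form m))ˣ where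
  val := root i
  inv := (2⁻¹ : ℝ) • root i
  val_inv := by
    rw [mul_smul_comm, root_sq, inv_smul_eq_iff₀ two_ne_zero, two_smul, one_add_one_eq_two]
  inv_val := by
    rw [smul_mul_assoc, root_sq, inv_smul_eq_iff₀ two_ne_zero, two_smul, one_add_one_eq_two]

/-- Conjugation by the simple roots defines an action of the braid group on the unit group of the
Clifford algebra, since distant roots commute up to the central unit `-1`. -/
theorem exists_rootHom (n : ℕ) :
    ∃ f : BraidGroup n →* MulAut (CliffordAlgebra (form (n - 1)))ˣ,
      ∀ i, f (braidσ i) = MulAut.conj (rootUnit i) := by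
  apply exists_braidHom
  · intro i j h
    rw [← map_mul, ← map_mul]
    have : rootUnit i * rootUnit j = -(rootUnit j * rootUnit i) :=
      Units.ext (root_anticomm i j h)
    rw [this]
    ext d
    simp [mul_assoc]
  · intro i j h
    rw [← map_mul, ← map_mul, ← map_mul, ← map_mul]
    exact congrArg _ (Units.ext (root_braid i j h))

theorem root_not_comm {m : ℕ} (i j : Fin m) (h : (i : ℕ) + 2 ≤ j) :
    rootUnit j * rootUnit i * (rootUnit j)⁻¹ * (rootUnit i)⁻¹ ≠ 1 := by
  intro hc
  rw [mul_inv_eq_one, mul_inv_eq_iff_eq_mul] at hc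
  have h1 : root i * root j = -(root i * root j) :=
    (root_anticomm i j h).trans (congrArg Neg.neg (congrArg Units.val hc))
  have h2 : (2 : ℝ) • ((rootUnit i * rootUnit j : (CliffordAlgebra (form m))ˣ) :
      CliffordAlgebra (form m)) = 0 := by
    rw [two_smul]
    exact eq_neg_iff_add_eq_zero.mp h1
  -- supplies the nontriviality of the Clifford algebra
  have : Invertible (2 : ℝ) := invertibleOfNonzero two_ne_zero
  exact (Units.ne_zero _) ((smul_eq_zero.mp h2).resolve_left two_ne_zero)

end Clifford

/-! ### Lifts of the generators -/

section Lifts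

variable {n : ℕ} {C : Type u} [Group C] (M : CrossedModule C (BraidGroup n)) (x : C)

/-- The lifts `x_i` of the Artin generators obtained from `x` by the successive conjugations
that carry `s i` to `s (i + 1)`; beyond the last generator the values are irrelevant. -/
def lift : ℕ → C
  | 0 => x
  | i + 1 => M.act (s n i * s n (i + 1)) (lift i)

variable (hx : M.map x = s n 0)

include hx

theorem map_lift {i : ℕ} (hi : i < n - 1) : M.map (lift M x i) = s n i := by
  induction i with
  | zero => exact hx
  | succ i ih => rw [lift, M.map_act, ih (by omega), s_shift hi, mul_inv_cancel_right]

theorem map_surjective : Function.Surjective M.map := by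
  have : M.map.range.Normal := ⟨by
    rintro _ ⟨c, rfl⟩ g
    exact ⟨M.act g c, M.map_act g c⟩⟩
  exact MonoidHom.range_eq_top.mp (eq_top_of_normal _ ⟨x, hx⟩)

/-- The lifts satisfy the braid relation exactly, by Peiffer's identity. -/
theorem lift_braid {i : ℕ} (hi : i + 1 < n - 1) :
    lift M x i * lift M x (i + 1) * lift M x i =
      lift M x (i + 1) * lift M x i * lift M x (i + 1) := by
  have h : lift M x (i + 1) =
      (lift M x i * lift M x (i + 1)) * lift M x i * (lift M x i * lift M x (i + 1))⁻¹ := by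
    rw [← M.peiffer, map_mul, map_lift M x hx hi, map_lift M x hx (show i < n - 1 by omega)]
    rfl
  rw [eq_mul_inv_iff_mul_eq] at h
  rw [← h, mul_assoc]

theorem map_lift_commutator {i j : ℕ} (hi : i < n - 1) (hj : j < n - 1)
    (h : i + 2 ≤ j ∨ j + 2 ≤ i) : M.map ⁅lift M x i, lift M x j⁆ = 1 := by
  rw [map_commutatorElement, map_lift M x hx hi, map_lift M x hx hj,
    commutatorElement_eq_one_iff_mul_comm]
  exact s_comm' n h

/-- Simultaneous conjugation of generators carries commutators of lifts to one another. -/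
theorem lift_commutator_conj {i j k l : ℕ} (hi : i < n - 1) (hj : j < n - 1) (hk : k < n - 1)
    (hl : l < n - 1) (h : i + 2 ≤ j ∨ j + 2 ≤ i) (g : BraidGroup n)
    (h1 : g * s n i = s n k * g) (h2 : g * s n j = s n l * g) :
    ⁅lift M x i, lift M x j⁆ = ⁅lift M x k, lift M x l⁆ := by
  refine commutator_conj M (map_surjective M x hx) g ?_ ?_ (map_lift_commutator M x hx hi hj h)
  · rw [map_lift M x hx hi, map_lift M x hx hk, h1]
  · rw [map_lift M x hx hj, map_lift M x hx hl, h2]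

/-- The commutator of any two distant lifts, in increasing order, equals that of lifts `0` and `2`. -/
theorem lift_commutator_eq {i j : ℕ} (hj : j < n - 1) (h : i + 2 ≤ j) :
    ⁅lift M x i, lift M x j⁆ = ⁅lift M x 0, lift M x 2⁆ := by
  induction i with
  | succ i ih =>
    rw [← ih (by omega)]
    exact (lift_commutator_conj M x hx (by omega) hj (by omega) hj (by omega)
      (s n i * s n (i + 1)) (s_shift (by omega))
      (s_shift_fix (by omega) (by omega))).symm
  | zero =>
    induction j, h using Nat.le_induction with
    | base => rfl
    | succ j h ih =>
      rw [← ih (by omega)]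
      exact (lift_commutator_conj M x hx (by omega) (by omega) (by omega) hj (by omega)
        (s n j * s n (j + 1)) (s_shift_fix (by omega) (by omega)) (s_shift hj)).symm

theorem lift_commutator_symm (hn : 4 ≤ n) :
    ⁅lift M x 0, lift M x 2⁆ = ⁅lift M x 2, lift M x 0⁆ :=
  lift_commutator_conj M x hx (by omega) (by omega) (by omega) (by omega) (by omega)
    _ (s_swap hn).1 (s_swap hn).2

theorem lift_commutator_sq (hn : 4 ≤ n) : ⁅lift M x 2, lift M x 0⁆ ^ 2 = 1 := by
  rw [pow_two]
  nth_rewrite 1 [← lift_commutator_symm M x hx hn]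
  rw [← commutatorElement_inv, inv_mul_cancel]

/-- If every character of `C` vanishing at `x` is trivial, then the lifts generate `C`. -/
theorem lift_closure_eq_top (hn : 4 ≤ n)
    (hchar : ∀ χ : C →* Multiplicative (AddCircle (1 : ℚ)), χ x = 1 → χ = 1) :
    Subgroup.closure (Set.range fun i : Fin (n - 1) => lift M x i) = ⊤ := by
  set K := Subgroup.closure (Set.range fun i : Fin (n - 1) => lift M x i) with hK
  have hmem : ∀ i, i < n - 1 → lift M x i ∈ K := fun i hi =>
    Subgroup.subset_closure ⟨⟨i, hi⟩, rfl⟩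
  have hxK : x ∈ K := hmem 0 (by omega)
  have hmap : K.map M.map = ⊤ := by
    rw [eq_top_iff, ← PresentedGroup.closure_range_of, Subgroup.closure_le]
    rintro _ ⟨i, rfl⟩
    refine ⟨lift M x i, hmem i i.2, ?_⟩
    rw [map_lift M x hx i.2, s_of_lt i.2]
    rfl
  have hcomm : commutator C ≤ K := by
    rw [commutator_def, Subgroup.commutator_le]
    intro a _ b _
    obtain ⟨a', ha', ha⟩ : M.map a ∈ K.map M.map := hmap ▸ Subgroup.mem_top _
    obtain ⟨b', hb', hb⟩ : M.map b ∈ K.map M.map := hmap ▸ Subgroup.mem_top _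
    rw [← commutator_congr M ha hb]
    exact K.mul_mem (K.mul_mem (K.mul_mem ha' hb') (K.inv_mem ha')) (K.inv_mem hb')
  have : K.Normal := ⟨fun k hk g => by
    have h : ⁅g, k⁆ ∈ K := hcomm (Subgroup.commutator_mem_commutator trivial trivial)
    have := K.mul_mem h hk
    rwa [commutatorElement_def, inv_mul_cancel_right] at this⟩
  let _ : CommGroup (C ⧸ K) :=
    { (inferInstance : Group (C ⧸ K)) with
      mul_comm := (Subgroup.Normal.quotient_commutative_iff_commutator_le.mpr hcomm).1.1 }
  rw [eq_top_iff]
  intro c _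
  by_contra hc
  have hne : Additive.ofMul (c : C ⧸ K) ≠ 0 := fun h =>
    hc ((QuotientGroup.eq_one_iff c).mp h)
  obtain ⟨ψ, hψ⟩ := CharacterModule.exists_character_apply_ne_zero_of_ne_zero hne
  apply hψ
  let χ : C →* Multiplicative (AddCircle (1 : ℚ)) :=
    (AddMonoidHom.toMultiplicativeRight ψ).comp (QuotientGroup.mk' K)
  have h1 : χ = 1 := by
    apply hchar
    change AddMonoidHom.toMultiplicativeRight ψ (x : C ⧸ K) = 1
    rw [(QuotientGroup.eq_one_iff x).mpr hxK, map_one]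
  exact DFunLike.congr_fun h1 c

/-- The quotient map `C → C / ⟨t⟩` factors through `∂`, since the lifts satisfy the braid relations
modulo `t`; hence `ker ∂ = ⟨t⟩`. -/
theorem ker_eq (hn : 4 ≤ n)
    (hgen : Subgroup.closure (Set.range fun i : Fin (n - 1) => lift M x i) = ⊤) :
    M.map.ker = Subgroup.zpowers ⁅lift M x 2, lift M x 0⁆ := by
  have ht := map_lift_commutator M x hx (i := 2) (j := 0) (by omega) (by omega) (by omega)
  set t := ⁅lift M x 2, lift M x 0⁆ with htdef
  apply le_antisymm
  · have : (Subgroup.zpowers t).Normal := ⟨fun k hk g => by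
      have hk1 : M.map k = 1 := by
        obtain ⟨m, rfl⟩ := hk
        simp [ht]
      rwa [← ker_comm M hk1 g, mul_inv_cancel_right]⟩
    obtain ⟨f, hf⟩ := exists_braidHom (n := n)
      (fun i : Fin (n - 1) => ((lift M x i : C) : C ⧸ Subgroup.zpowers t)) (by
        intro i j h
        rw [← commutatorElement_eq_one_iff_mul_comm, ← QuotientGroup.mk'_apply,
          ← QuotientGroup.mk'_apply, ← map_commutatorElement, lift_commutator_eq M x hx j.2 h,
          lift_commutator_symm M x hx hn]
        exact (QuotientGroup.eq_one_iff _).mpr (Subgroup.mem_zpowers t)) (by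
        rintro i ⟨j, hj⟩ h
        obtain rfl : (i : ℕ) + 1 = j := h
        exact congrArg (QuotientGroup.mk' (Subgroup.zpowers t)) (lift_braid M x hx hj))
    have hcomp : f.comp M.map = QuotientGroup.mk' (Subgroup.zpowers t) := by
      apply MonoidHom.eq_of_eqOn_dense hgen
      rintro _ ⟨i, rfl⟩
      change f (M.map (lift M x i)) = _
      rw [map_lift M x hx i.2, s_of_lt i.2]
      exact hf i
    intro c hc
    rw [← QuotientGroup.eq_one_iff, ← QuotientGroup.mk'_apply, ← hcomp, MonoidHom.comp_apply,
      MonoidHom.mem_ker.mp hc, map_one]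
  · rw [Subgroup.zpowers_le]
    exact ht

theorem act_mul_inv_eq (hn : 4 ≤ n) :
    M.act (s n 2) x * x⁻¹ = ⁅lift M x 2, lift M x 0⁆ := by
  rw [commutatorElement_def, ← M.peiffer, map_lift M x hx (by omega)]
  rfl

end Lifts

end BraidCM

/-- For `n ≥ 4`, in the free crossed module `∂ : C_n → B_n` on `{σ_1}` with generator
`x = φ σ_1`, the element `t = (σ_3 • x) x⁻¹` has order `2` and generates the kernel of
`∂`. -/
theorem braid_freeCrossedModule_kernel_generator (n : ℕ) (hn : 4 ≤ n)
    {C : Type*} [Group C] (M : CrossedModule C (BraidGroup n))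
    (φ : ({braidσ (⟨0, by omega⟩ : Fin (n - 1))} : Set (BraidGroup n)) → C)
    (hfree : M.IsFreeOn φ)
    (hφ : ∀ s, M.map (φ s) = (s : BraidGroup n)) :
    ∀ x : C, x = φ ⟨braidσ (⟨0, by omega⟩ : Fin (n - 1)), rfl⟩ →
    ∀ t : C, t = M.act (braidσ (⟨2, by omega⟩ : Fin (n - 1))) x * x⁻¹ →
      orderOf t = 2 ∧ M.map.ker = Subgroup.zpowers t := by
  rintro x hxφ t rfl
  have hσ : ∀ {i : ℕ} (hi : i < n - 1), BraidCM.s n i = braidσ ⟨i, hi⟩ := BraidCM.s_of_lt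
  have hx : M.map x = BraidCM.s n 0 := by rw [hxφ, hφ, hσ]
  have ht := BraidCM.act_mul_inv_eq M x hx hn
  rw [hσ (show 2 < n - 1 by omega)] at ht
  have hy : ∀ y, φ y = x := by
    rintro ⟨y, rfl⟩
    exact hxφ.symm
  refine ⟨orderOf_eq_prime ?_ ?_, ?_⟩
  · rw [ht, BraidCM.lift_commutator_sq M x hx hn]
  · -- map to the inner crossed module of the unit group of a Clifford algebra
    intro h1
    obtain ⟨f, hf⟩ := BraidCM.exists_rootHom n
    obtain ⟨β, ⟨hβ1, -, hβ2⟩, -⟩ := hfree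
      (BraidCM.innerCM (CliffordAlgebra (BraidCM.form (n - 1)))ˣ)
      (MulEquiv.ulift.symm.toMonoidHom.comp f)
      (fun _ => ULift.up (BraidCM.rootUnit ⟨0, by omega⟩)) (by
        rintro ⟨y, rfl⟩
        rw [hφ]
        exact congrArg ULift.up (hf _))
    have hβx : β x = ULift.up (BraidCM.rootUnit ⟨0, by omega⟩) := by rw [← hβ1 ⟨_, rfl⟩, hxφ]
    apply BraidCM.root_not_comm (m := n - 1) ⟨0, by omega⟩ ⟨2, by omega⟩ le_rfl
    have h2 := congrArg (fun c => (β c).down) h1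
    simp only [map_mul, map_inv, hβ2, hβx, map_one] at h2
    rw [← MulAut.conj_apply, ← hf]
    exact h2
  · rw [ht]
    refine BraidCM.ker_eq M x hx hn (BraidCM.lift_closure_eq_top M x hx hn fun χ hχ => ?_)
    -- a character and the trivial character both solve the lifting problem over the trivial group
    have hinv : ∀ g c, χ (M.act g c) = χ c := by
      intro g c
      obtain ⟨k, rfl⟩ := BraidCM.map_surjective M x hx g
      rw [M.peiffer, map_mul, map_mul, map_inv, mul_comm (χ k), mul_inv_cancel_right]
    obtain ⟨β, -, hβ⟩ := hfree (BraidCM.abelianCM (Multiplicative (AddCircle (1 : ℚ)))) 1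
      (fun _ => 1) (fun _ => rfl)
    have h1 := hβ (MulEquiv.ulift.symm.toMonoidHom.comp χ)
      ⟨fun y => by rw [hy]; exact congrArg ULift.up hχ, fun _ => rfl,
        fun g c => congrArg ULift.up (hinv g c)⟩
    have h2 := hβ 1 ⟨fun _ => rfl, fun _ => rfl, fun _ _ => rfl⟩
    ext c
    exact congrArg ULift.down (DFunLike.congr_fun (h1.trans h2.symm) c)
end

section
/- For n ≥ 4, let ∂ : C_n → B_n be the free crossed module over the Artin braid group B_n on the single-element subset {σ_1}, with distinguished generator x = φ(σ_1) ∈ C_n, and let N be the normal subgroup of C_n generated by the element (σ_3 • x)·x⁻¹. Then ∂ induces an isomorphism of groups C_n/N ≅ B_n; that is, as a crossed module over itself, B_n is generated by σ_1 subject to the single relation σ_3 • σ_1 = σ_1. -/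
section BraidCentralExtension

variable {m : ℕ}

lemma braid_of_comm {i j : Fin m} (h : (i : ℕ) + 2 ≤ j) :
    (PresentedGroup.of i * PresentedGroup.of j : PresentedGroup (braidRels m)) =
      PresentedGroup.of j * PresentedGroup.of i := by
  have h1 : (PresentedGroup.mk (braidRels m)
      (.of i * .of j * (.of i)⁻¹ * (.of j)⁻¹)) = 1 :=
    PresentedGroup.one_of_mem ⟨i, j, Or.inl ⟨h, rfl⟩⟩
  simp only [map_mul, map_inv] at h1
  change PresentedGroup.of i * PresentedGroup.of j * (PresentedGroup.of i)⁻¹ *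
    (PresentedGroup.of j)⁻¹ = 1 at h1
  rwa [mul_inv_eq_one, mul_inv_eq_iff_eq_mul] at h1

/-- Consecutive Artin generators are conjugate: `σ_{j} = (σ_i σ_j) σ_i (σ_i σ_j)⁻¹` for
`j = i + 1`, a rewriting of the braid relation. -/
lemma braid_of_conj {i j : Fin m} (h : (i : ℕ) + 1 = j) :
    ((PresentedGroup.of i * PresentedGroup.of j) * PresentedGroup.of i *
      (PresentedGroup.of i * PresentedGroup.of j)⁻¹ : PresentedGroup (braidRels m)) =
      PresentedGroup.of j := by
  have h1 : (PresentedGroup.mk (braidRels m)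
      (.of i * .of j * .of i * (.of j)⁻¹ * (.of i)⁻¹ * (.of j)⁻¹)) = 1 :=
    PresentedGroup.one_of_mem ⟨i, j, Or.inr ⟨h, rfl⟩⟩
  simp only [map_mul, map_inv] at h1
  change PresentedGroup.of i * PresentedGroup.of j * PresentedGroup.of i *
    (PresentedGroup.of j)⁻¹ * (PresentedGroup.of i)⁻¹ * (PresentedGroup.of j)⁻¹ = 1 at h1
  rw [mul_inv_eq_one] at h1
  rw [mul_inv_rev, ← mul_assoc, h1]

/-- A normal subgroup of the braid group containing `σ_1` is everything, since all Artin
generators are conjugate. -/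
lemma braid_normal_eq_top_s9 (hm : 0 < m) (K : Subgroup (PresentedGroup (braidRels m)))
    [K.Normal] (h0 : PresentedGroup.of ⟨0, hm⟩ ∈ K) : K = ⊤ := by
  have key : ∀ k (hk : k < m), PresentedGroup.of ⟨k, hk⟩ ∈ K := by
    intro k
    induction k with
    | zero => intro _; exact h0
    | succ k ih =>
      intro hk
      rw [← braid_of_conj (i := ⟨k, by omega⟩) (j := ⟨k + 1, hk⟩) rfl]
      exact Subgroup.Normal.conj_mem ‹_› _ (ih _) _
  rw [eq_top_iff, ← PresentedGroup.closure_range_of, Subgroup.closure_le]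
  rintro _ ⟨i, rfl⟩
  exact key i i.2

variable {Q : Type*} [Group Q]

/-- If the kernel of `p` is central, conjugation by `a` depends only on `p a`. -/
lemma conj_eq_of_central {B : Type*} [Group B] (p : Q →* B)
    (hcent : ∀ q, p q = 1 → ∀ r, q * r = r * q) {a b : Q} (h : p a = p b) (r : Q) :
    a * r * a⁻¹ = b * r * b⁻¹ := by
  have h1 := hcent (b⁻¹ * a) (by simp [h]) r
  rw [mul_inv_eq_iff_eq_mul]
  calc a * r = b * ((b⁻¹ * a) * r) := by group
    _ = b * (r * (b⁻¹ * a)) := by rw [h1]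
    _ = b * r * b⁻¹ * a := by group

/-- `LiftsCommute p g h` says that every lift of `g` along `p` commutes with every lift
of `h`. -/
def LiftsCommute {B : Type*} [Group B] (p : Q →* B) (g h : B) : Prop :=
  ∀ a b, p a = g → p b = h → a * b = b * a

/-- In a central extension one commuting pair of lifts suffices. -/
lemma LiftsCommute.of_exists {B : Type*} [Group B] (p : Q →* B)
    (hcent : ∀ q, p q = 1 → ∀ r, q * r = r * q) {a b : Q} (h : a * b = b * a) :
    LiftsCommute p (p a) (p b) := by
  intro a' b' ha hb
  have h1 : a' * b * a'⁻¹ = b := by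
    rw [conj_eq_of_central p hcent ha b, mul_inv_eq_iff_eq_mul, h]
  have h2 : b' * a' * b'⁻¹ = a' := by
    rw [conj_eq_of_central p hcent hb a', mul_inv_eq_iff_eq_mul]
    exact (mul_inv_eq_iff_eq_mul.1 h1).symm
  exact (mul_inv_eq_iff_eq_mul.1 h2).symm

lemma LiftsCommute.conj {B : Type*} [Group B] {p : Q →* B}
    (hs : Function.Surjective p) {g h : B} (H : LiftsCommute p g h) (k : B) :
    LiftsCommute p (k * g * k⁻¹) (k * h * k⁻¹) := by
  obtain ⟨c, rfl⟩ := hs k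
  intro a b ha hb
  have h1 := H (c⁻¹ * a * c) (c⁻¹ * b * c) (by simp [ha, mul_assoc]) (by simp [hb, mul_assoc])
  have h2 : c⁻¹ * (a * b) * c = c⁻¹ * (b * a) * c := by
    calc _ = (c⁻¹ * a * c) * (c⁻¹ * b * c) := by group
      _ = _ := h1
      _ = _ := by group
  simpa using h2

/-- Any pair `(σ_{i+1}, σ_{j+1})` with `i + 2 ≤ j` is simultaneously conjugate to
`(σ_1, σ_3)`: push the second index up first, then the first one. Hence commutation of the
lifts of `σ_1` and `σ_3` propagates to all far-apart pairs. -/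
lemma braid_liftsCommute (hm : 2 < m) (p : Q →* PresentedGroup (braidRels m))
    (hs : Function.Surjective p)
    (h02 : LiftsCommute p (.of ⟨0, by omega⟩) (.of ⟨2, hm⟩))
    {i j : Fin m} (hij : (i : ℕ) + 2 ≤ j) : LiftsCommute p (.of i) (.of j) := by
  have h0 : ∀ k (hk : k + 2 < m), LiftsCommute p (.of ⟨0, by omega⟩) (.of ⟨k + 2, hk⟩) := by
    intro k
    induction k with
    | zero => intro _; exact h02
    | succ k ih =>
      intro hk
      have h1 := (ih (by omega)).conj hs (.of ⟨k + 2, by omega⟩ * .of ⟨k + 1 + 2, hk⟩)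
      rw [braid_of_conj (by simp)] at h1
      -- the conjugating element commutes with `σ_1`
      have c1 := braid_of_comm (i := ⟨0, by omega⟩) (j := (⟨k + 2, by omega⟩ : Fin m)) (by simp)
      have c2 := braid_of_comm (i := ⟨0, by omega⟩) (j := (⟨k + 1 + 2, hk⟩ : Fin m)) (by simp)
      rwa [mul_assoc _ _ (PresentedGroup.of (⟨0, by omega⟩ : Fin m)), ← c2, ← mul_assoc, ← c1,
        mul_assoc (PresentedGroup.of (⟨0, by omega⟩ : Fin m)), mul_inv_cancel_right] at h1
  obtain ⟨j, hj⟩ := j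
  have h1 : ∀ k (hk : k + 2 ≤ j), LiftsCommute p (.of ⟨k, by omega⟩) (.of ⟨j, hj⟩) := by
    intro k
    induction k with
    | zero =>
      intro hk
      obtain ⟨l, rfl⟩ : ∃ l, j = l + 2 := ⟨j - 2, by omega⟩
      exact h0 l hj
    | succ k ih =>
      intro hk
      have h1 := (ih (by omega)).conj hs (.of ⟨k, by omega⟩ * .of ⟨k + 1, by omega⟩)
      rw [braid_of_conj (by simp)] at h1
      -- the conjugating element commutes with `σ_{j+1}`
      have c1 := braid_of_comm (i := ⟨k, by omega⟩) (j := (⟨j, hj⟩ : Fin m)) (by simp; omega)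
      have c2 := braid_of_comm (i := ⟨k + 1, by omega⟩) (j := (⟨j, hj⟩ : Fin m))
        (by simp; omega)
      rwa [mul_assoc _ _ (PresentedGroup.of (⟨j, hj⟩ : Fin m)), c2, ← mul_assoc, c1,
        mul_assoc (PresentedGroup.of (⟨j, hj⟩ : Fin m)), mul_inv_cancel_right] at h1
  exact h1 i hij

/-- A central extension of the braid group that is normally generated by a lift `x` of `σ_1`
commuting with a lift of `σ_3` is trivial: it splits, and the image of the splitting is normal
and contains `x`. -/
lemma braid_central_ext_injective (hm : 2 < m) (p : Q →* PresentedGroup (braidRels m))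
    (hs : Function.Surjective p) (hcent : ∀ q, p q = 1 → ∀ r, q * r = r * q)
    {x y : Q} (hx : p x = .of ⟨0, by omega⟩) (hy : p y = .of ⟨2, hm⟩) (hxy : x * y = y * x)
    (hgen : Subgroup.normalClosure {x} = ⊤) : Function.Injective p := by
  choose t ht using fun i : Fin m => hs (.of i)
  -- Transporting `x` along the conjugations of `braid_of_conj` makes the braid relations hold.
  obtain ⟨s, hs0, hsucc⟩ : ∃ s : ℕ → Q, s 0 = x ∧ ∀ k (hk : k + 1 < m),
      s (k + 1) = (t ⟨k, by omega⟩ * t ⟨k + 1, hk⟩) * s k *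
        (t ⟨k, by omega⟩ * t ⟨k + 1, hk⟩)⁻¹ := by
    refine ⟨fun n => Nat.rec x (fun k q => if hk : k + 1 < m then
      (t ⟨k, by omega⟩ * t ⟨k + 1, hk⟩) * q * (t ⟨k, by omega⟩ * t ⟨k + 1, hk⟩)⁻¹
      else 1) n, rfl, fun k hk => ?_⟩
    simp only [hk, dif_pos]
  have hps : ∀ k (hk : k < m), p (s k) = .of ⟨k, hk⟩ := by
    intro k
    induction k with
    | zero => intro _; rw [hs0, hx]
    | succ k ih =>
      intro hk
      rw [hsucc k hk, map_mul, map_mul, map_inv, map_mul, ht, ht, ih (by omega)]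
      exact braid_of_conj rfl
  have hcomm : LiftsCommute p (.of ⟨0, by omega⟩) (.of ⟨2, hm⟩) := by
    rw [← hx, ← hy]
    exact LiftsCommute.of_exists p hcent hxy
  have hrel : ∀ r ∈ braidRels m, FreeGroup.lift (fun i : Fin m => s i) r = 1 := by
    rintro r ⟨i, j, ⟨hij, rfl⟩ | ⟨hij, rfl⟩⟩
    · have := braid_liftsCommute hm p hs hcomm hij (s i) (s j) (hps i i.2) (hps j j.2)
      simp only [map_mul, map_inv, FreeGroup.lift_apply_of]
      rw [this]
      group
    · obtain ⟨i, hi⟩ := i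
      obtain ⟨j, hj⟩ := j
      obtain rfl : i + 1 = j := hij
      simp only [map_mul, map_inv, FreeGroup.lift_apply_of]
      have h1 := hsucc i hj
      rw [conj_eq_of_central p hcent (b := s i * s (i + 1))
        (by rw [map_mul, map_mul, ht, ht, hps, hps])] at h1
      rw [mul_inv_eq_one]
      conv_rhs => rw [h1]
      group
  let f : PresentedGroup (braidRels m) →* Q := PresentedGroup.toGroup hrel
  have hpf : ∀ b, p (f b) = b := by
    have : p.comp f = MonoidHom.id _ := by
      refine PresentedGroup.ext fun i => ?_
      simp only [MonoidHom.comp_apply, MonoidHom.id_apply, f, PresentedGroup.toGroup.of]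
      exact hps i i.2
    exact fun b => DFunLike.congr_fun this b
  have hnorm : f.range.Normal := by
    refine ⟨?_⟩
    rintro _ ⟨b, rfl⟩ q
    rw [conj_eq_of_central p hcent (b := f (p q)) (by rw [hpf])]
    exact ⟨p q * b * (p q)⁻¹, by simp⟩
  have htop : f.range = ⊤ := by
    rw [eq_top_iff, ← hgen]
    refine Subgroup.normalClosure_le_normal ?_
    rw [Set.singleton_subset_iff]
    refine ⟨.of ⟨0, by omega⟩, ?_⟩
    simp only [f, PresentedGroup.toGroup.of, hs0]
  rw [injective_iff_map_eq_one]
  intro q hq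
  obtain ⟨b, rfl⟩ : q ∈ f.range := htop ▸ Subgroup.mem_top q
  rw [hpf] at hq
  rw [hq, map_one]

end BraidCentralExtension

/-- A crossed module to the trivial group: an abelian group with the trivial action. -/
def CrossedModule.ofComm (D H : Type*) [CommGroup D] [Group H] [Subsingleton H] :
    CrossedModule D H where
  map := 1
  act := 1
  map_act _ _ := Subsingleton.elim _ _
  peiffer a b := by simp

/-- If `∂` restricted to the normal closure of the image of `φ` is already surjective, a free
crossed module on `φ` is normally generated by that image: the quotient by the normal closure is
abelian by the Peiffer identity, with trivial action, and by freeness has no nontrivial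
characters. Using `ℚ/ℤ`-valued characters makes the argument independent of the universes over
which freeness quantifies. -/
lemma CrossedModule.IsFreeOn.normalClosure_eq_top.{uC, uG, uY, uD, uH}
    {C : Type uC} {G : Type uG} [Group C] [Group G]
    {M : CrossedModule C G} {Y : Type uY} {φ : Y → C}
    (hfree : CrossedModule.IsFreeOn.{uC, uG, uY, uD, uH} M φ)
    (hsurj : (Subgroup.normalClosure (Set.range φ)).map M.map = ⊤) :
    Subgroup.normalClosure (Set.range φ) = ⊤ := by
  set K := Subgroup.normalClosure (Set.range φ) with hK
  have hlift : ∀ g : G, ∃ k ∈ K, M.map k = g := fun g => by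
    have : g ∈ K.map M.map := hsurj ▸ Subgroup.mem_top g
    simpa using this
  have hact : ∀ (g : G) (c : C), (M.act g c : C ⧸ K) = c := by
    intro g c
    obtain ⟨k, hk, rfl⟩ := hlift g
    rw [M.peiffer]
    have : (k : C ⧸ K) = 1 := (QuotientGroup.eq_one_iff k).2 hk
    simp [this]
  let : CommGroup (C ⧸ K) :=
    { (inferInstance : Group (C ⧸ K)) with
      mul_comm := by
        intro a b
        induction a using QuotientGroup.induction_on with | H a => ?_
        induction b using QuotientGroup.induction_on with | H b => ?_
        have h := hact (M.map a) b
        rw [M.peiffer] at h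
        rw [QuotientGroup.mk_mul, QuotientGroup.mk_mul, QuotientGroup.mk_inv] at h
        exact mul_inv_eq_iff_eq_mul.1 h }
  rw [eq_top_iff]
  intro c _
  by_contra hc
  have hc' : Additive.ofMul (c : C ⧸ K) ≠ 0 := fun h =>
    hc ((QuotientGroup.eq_one_iff c).1 (Additive.ofMul.injective h))
  obtain ⟨χ, hχ⟩ := CharacterModule.exists_character_apply_ne_zero_of_ne_zero hc'
  let D := ULift.{uD} (Multiplicative (AddCircle (1 : ℚ)))
  let ψ : C ⧸ K →* D :=
    MulEquiv.ulift.symm.toMonoidHom.comp (AddMonoidHom.toMultiplicativeRight χ)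
  obtain ⟨β, -, hβ⟩ := hfree (CrossedModule.ofComm D PUnit.{uH + 1}) 1 (fun _ => 1)
    (fun _ => rfl)
  have h1 : 1 = β := hβ 1 ⟨fun _ => rfl, fun _ => rfl, fun _ _ => rfl⟩
  have h2 : ψ.comp (QuotientGroup.mk' K) = β := by
    refine hβ _ ⟨fun y => ?_, fun _ => rfl, fun g d => ?_⟩
    · have : (φ y : C ⧸ K) = 1 :=
        (QuotientGroup.eq_one_iff _).2 (Subgroup.subset_normalClosure ⟨y, rfl⟩)
      simp [this]
    · change ψ (M.act g d : C ⧸ K) = ψ d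
      rw [hact]
  have h3 : ψ c = 1 := DFunLike.congr_fun (h2.trans h1.symm) c
  exact hχ (congrArg (fun d : D => Multiplicative.toAdd d.down) h3)

/-- For `n ≥ 4`, in the free crossed module `∂ : C_n → B_n` on `{σ_1}` with generator
`x = φ σ_1`, the map `∂` induces an isomorphism `C_n / N ≅ B_n`, where `N` is the
normal subgroup of `C_n` generated by `(σ_3 • x) x⁻¹`; that is, as a crossed module
over itself, `B_n` is generated by `σ_1` subject to the single relation
`σ_3 • σ_1 = σ_1`. -/
theorem braid_as_crossedModule_presentation (n : ℕ) (hn : 4 ≤ n)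
    {C : Type*} [Group C] (M : CrossedModule C (BraidGroup n))
    (φ : ({braidσ (⟨0, by omega⟩ : Fin (n - 1))} : Set (BraidGroup n)) → C)
    (hfree : M.IsFreeOn φ)
    (hφ : ∀ s, M.map (φ s) = (s : BraidGroup n)) :
    ∀ x : C, x = φ ⟨braidσ (⟨0, by omega⟩ : Fin (n - 1)), rfl⟩ →
    ∃ e : C ⧸ Subgroup.normalClosure
        ({M.act (braidσ (⟨2, by omega⟩ : Fin (n - 1))) x * x⁻¹} : Set C) ≃*
          BraidGroup n,
      ∀ c : C, e (QuotientGroup.mk c) = M.map c := by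
  intro x hx
  have hm : 2 < n - 1 := by omega
  have hMx : M.map x = PresentedGroup.of (⟨0, by omega⟩ : Fin (n - 1)) := by rw [hx, hφ]; rfl
  have hrange : Set.range φ = {x} := by
    rw [hx, Set.range_unique]
    rfl
  have hsurj : Function.Surjective M.map := by
    rw [← MonoidHom.range_eq_top]
    have : M.map.range.Normal := by
      refine ⟨?_⟩
      rintro _ ⟨c, rfl⟩ g
      exact ⟨M.act g c, M.map_act g c⟩
    exact braid_normal_eq_top_s9 (by omega) _ ⟨x, hMx⟩
  have hgen : Subgroup.normalClosure {x} = ⊤ := by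
    rw [← hrange]
    refine hfree.normalClosure_eq_top ?_
    have := (Subgroup.normalClosure_normal (s := Set.range φ)).map M.map hsurj
    refine braid_normal_eq_top_s9 (by omega) _ ⟨x, ?_, hMx⟩
    exact Subgroup.subset_normalClosure (hrange ▸ rfl)
  set N := Subgroup.normalClosure
    ({M.act (braidσ (⟨2, by omega⟩ : Fin (n - 1))) x * x⁻¹} : Set C) with hN
  have hNker : N ≤ M.map.ker := by
    refine Subgroup.normalClosure_le_normal ?_
    rw [Set.singleton_subset_iff, SetLike.mem_coe, MonoidHom.mem_ker, map_mul, map_inv,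
      M.map_act, hMx, braidσ, ← braid_of_comm (by simp)]
    group
  let p : C ⧸ N →* BraidGroup n := QuotientGroup.lift N M.map hNker
  have hp : ∀ c : C, p c = M.map c := fun c => rfl
  have hps : Function.Surjective p := fun b => by
    obtain ⟨c, rfl⟩ := hsurj b
    exact ⟨c, rfl⟩
  obtain ⟨y, hy⟩ := hsurj (PresentedGroup.of (⟨2, hm⟩ : Fin (n - 1)))
  have hinj : Function.Injective p := by
    refine braid_central_ext_injective hm p hps ?_ (x := (x : C ⧸ N)) (y := (y : C ⧸ N))
      hMx hy ?_ ?_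
    · -- the Peiffer identity makes `ker ∂` central
      intro q hq r
      induction q using QuotientGroup.induction_on with | H c => ?_
      induction r using QuotientGroup.induction_on with | H d => ?_
      have h := M.peiffer c d
      rw [← hp c, hq, map_one, MulAut.one_apply, eq_mul_inv_iff_mul_eq] at h
      rw [← QuotientGroup.mk_mul, ← QuotientGroup.mk_mul, h]
    · have h1 : M.act (braidσ (⟨2, by omega⟩ : Fin (n - 1))) x * x⁻¹ ∈ N :=
        Subgroup.subset_normalClosure rfl
      rw [braidσ, ← hy, M.peiffer] at h1
      have h2 := (QuotientGroup.eq_one_iff _).2 h1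
      simp only [QuotientGroup.mk_mul, QuotientGroup.mk_inv] at h2
      rw [mul_inv_eq_one, mul_inv_eq_iff_eq_mul] at h2
      exact h2.symm
    · have h1 := Subgroup.map_normalClosure {x} (QuotientGroup.mk' N)
        (QuotientGroup.mk'_surjective N)
      rw [hgen, Subgroup.map_top_of_surjective _ (QuotientGroup.mk'_surjective N),
        Set.image_singleton] at h1
      exact h1.symm
  exact ⟨MulEquiv.ofBijective p ⟨hinj, hps⟩, hp⟩
end

section
/- Let G be a group whose abelianization is a free abelian group (or trivial), and let A be an abelian group regarded as a G-module with trivial action. Then the second group cohomology H²(G; A) is isomorphic to the group Hom(H₂(G), A) of homomorphisms from the second integral group homology of G to A. -/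
namespace HopfH2

variable {G : Type} [Group G] {A : Type} [AddCommGroup A]

/-! ### Invariant homomorphisms on the relation subgroup -/

@[simp] lemma pi_of (g : G) : hopfπ G (FreeGroup.of g) = g := by simp [hopfπ]

lemma mem_N {x : FreeGroup G} : x ∈ hopfN G ↔ hopfπ G x = 1 := Iff.rfl

variable (G A) in
/-- The group `Hom_F(N, A)` of homomorphisms `N → A` invariant under conjugation by
`F = FreeGroup G`. -/
def InvHom : AddSubgroup (Additive (hopfN G) →+ A) where
  carrier := {φ | ∀ (x : FreeGroup G) (n : FreeGroup G) (hn : n ∈ hopfN G)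
    (hx : x * n * x⁻¹ ∈ hopfN G), φ (.ofMul ⟨x * n * x⁻¹, hx⟩) = φ (.ofMul ⟨n, hn⟩)}
  add_mem' := fun ha hb x n hn hx => by
    simp only [AddMonoidHom.add_apply, ha x n hn hx, hb x n hn hx]
  zero_mem' := fun x n hn hx => rfl
  neg_mem' := fun ha x n hn hx => by
    simp only [AddMonoidHom.neg_apply, ha x n hn hx]

/-- The value of `φ` at an element of `F` that lies in `N`. -/
def ev (φ : InvHom G A) (x : FreeGroup G) (hx : hopfπ G x = 1) : A := φ.1 (.ofMul ⟨x, hx⟩)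

lemma ev_mul (φ : InvHom G A) {x y : FreeGroup G} (hx : hopfπ G x = 1) (hy : hopfπ G y = 1)
    (hxy : hopfπ G (x * y) = 1) : ev φ (x * y) hxy = ev φ x hx + ev φ y hy :=
  φ.1.map_add (.ofMul ⟨x, hx⟩) (.ofMul ⟨y, hy⟩)

lemma ev_inv (φ : InvHom G A) {x : FreeGroup G} (hx : hopfπ G x = 1)
    (hx' : hopfπ G x⁻¹ = 1) : ev φ x⁻¹ hx' = - ev φ x hx :=
  φ.1.map_neg (.ofMul ⟨x, hx⟩)

lemma ev_one (φ : InvHom G A) (h : hopfπ G 1 = 1) : ev φ 1 h = 0 := φ.1.map_zero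

lemma ev_conj (φ : InvHom G A) (x : FreeGroup G) {n : FreeGroup G} (hn : hopfπ G n = 1)
    (hx : hopfπ G (x * n * x⁻¹) = 1) : ev φ (x * n * x⁻¹) hx = ev φ n hn := φ.2 x n hn hx

lemma ev_congr (φ : InvHom G A) {x y : FreeGroup G} (h : x = y) (hx : hopfπ G x = 1) :
    ev φ x hx = ev φ y (h ▸ hx) := by subst h; rfl

/-! ### The cocycle of an invariant homomorphism -/

/-- The extension of `φ` from `N` to a function on `F` that vanishes on the generators: the value
at `x` is `φ (x g⁻¹)`, where `g` is the generator attached to `π x`. -/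
def coch (φ : InvHom G A) (x : FreeGroup G) : A :=
  ev φ (x * (FreeGroup.of (hopfπ G x))⁻¹) (by simp)

lemma coch_of (φ : InvHom G A) (g : G) : coch φ (FreeGroup.of g) = 0 := by
  unfold coch
  rw [ev_congr φ (y := 1) (by simp), ev_one]

/-- The coboundary of `coch φ` is inflated from `G`. -/
lemma coch_mul (φ : InvHom G A) (x y : FreeGroup G) :
    coch φ (x * y) = coch φ x + coch φ y +
      coch φ (FreeGroup.of (hopfπ G x) * FreeGroup.of (hopfπ G y)) := by
  unfold coch
  set a := FreeGroup.of (hopfπ G x) with ha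
  set b := FreeGroup.of (hopfπ G y) with hb
  have e : x * y * (FreeGroup.of (hopfπ G (x * y)))⁻¹ =
      (x * a⁻¹) * ((a * (y * b⁻¹) * a⁻¹) * (a * b * (FreeGroup.of (hopfπ G (a * b)))⁻¹)) := by
    have : hopfπ G (a * b) = hopfπ G (x * y) := by simp [ha, hb]
    rw [this]
    group
  have h1 : hopfπ G (x * a⁻¹) = 1 := by simp [ha]
  have h2 : hopfπ G (y * b⁻¹) = 1 := by simp [hb]
  have h3 : hopfπ G (a * (y * b⁻¹) * a⁻¹) = 1 := by rw [map_mul, map_mul, h2, map_inv]; simp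
  have h4 : hopfπ G (a * b * (FreeGroup.of (hopfπ G (a * b)))⁻¹) = 1 := by simp
  rw [ev_congr φ e, ev_mul φ h1 (by rw [map_mul, h3, h4, one_mul]), ev_mul φ h3 h4,
    ev_conj φ a h2, add_assoc]

lemma coch_of_mem (φ : InvHom G A) {n : FreeGroup G} (hn : hopfπ G n = 1) :
    coch φ n = ev φ n hn - coch φ (FreeGroup.of 1 * FreeGroup.of 1) := by
  have h1 : coch φ (FreeGroup.of 1 * FreeGroup.of 1) = ev φ (FreeGroup.of 1) (by simp) := by
    unfold coch
    exact ev_congr φ (by simp) _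
  rw [h1]
  unfold coch
  rw [ev_congr φ (y := n * (FreeGroup.of 1)⁻¹) (by rw [hn]), ev_mul φ hn (by simp),
    ev_inv φ (by simp), sub_eq_add_neg]

lemma mem_cocycles_iff (f : G × G → A) :
    f ∈ groupCohomology.cocycles₂ (Rep.trivial ℤ G A) ↔ ∀ g h j : G,
      f (g * h, j) + f (g, h) = f (h, j) + f (g, h * j) :=
  groupCohomology.mem_cocycles₂_iff (A := Rep.trivial ℤ G A) f

lemma mem_coboundaries_iff (f : G × G → A) :
    f ∈ groupCohomology.coboundaries₂ (Rep.trivial ℤ G A) ↔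
      ∃ c : G → A, ∀ g h : G, f (g, h) = c h - c (g * h) + c g := by
  constructor
  · rintro ⟨c, rfl⟩
    exact ⟨c, fun _ _ => rfl⟩
  · rintro ⟨c, hc⟩
    exact ⟨c, funext fun p => (hc p.1 p.2).symm⟩

variable (G A) in
/-- The 2-cocycle `(a, b) ↦ φ (ā b̄ (ab)‾⁻¹)` attached to an invariant homomorphism `φ`. -/
def toCocycle : InvHom G A →+ groupCohomology.cocycles₂ (Rep.trivial ℤ G A) where
  toFun φ := ⟨fun p => coch φ (FreeGroup.of p.1 * FreeGroup.of p.2), by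
    rw [mem_cocycles_iff]
    intro g h j
    -- expand `coch φ` of a product of three generators in both ways
    have h1 := coch_mul φ (FreeGroup.of g * FreeGroup.of h) (FreeGroup.of j)
    have h2 := coch_mul φ (FreeGroup.of g) (FreeGroup.of h * FreeGroup.of j)
    simp only [coch_of, map_mul, pi_of, add_zero, zero_add] at h1 h2
    rw [mul_assoc, h2] at h1
    rw [h1, add_comm]⟩
  map_zero' := rfl
  map_add' _ _ := rfl

lemma toCocycle_apply (φ : InvHom G A) (a b : G) :
    (toCocycle G A φ).1 (a, b) = coch φ (FreeGroup.of a * FreeGroup.of b) := rfl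

/-! ### Every cocycle comes from an invariant homomorphism -/

/-- The set `A × G` underlying the central extension of `G` by `A` with cocycle `f`. -/
@[ext] structure TwExt (f : G × G → A) where
  /-- The component in `A`. -/
  fst : A
  /-- The component in `G`. -/
  snd : G

/-- For a 2-cocycle `f`, not necessarily normalized, the product
`(a, g) (b, h) = (a + b + f (g, h), g h)` is a group law with unit `(- f (1, 1), 1)`. -/
abbrev TwExt.group (f : G × G → A)
    (hf : ∀ g h j : G, f (g * h, j) + f (g, h) = f (h, j) + f (g, h * j)) : Group (TwExt f) :=
  letI : Mul (TwExt f) := ⟨fun x y => ⟨x.fst + y.fst + f (x.snd, y.snd), x.snd * y.snd⟩⟩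
  letI : One (TwExt f) := ⟨⟨- f (1, 1), 1⟩⟩
  letI : Inv (TwExt f) := ⟨fun x => ⟨- x.fst - f (x.snd⁻¹, x.snd) - f (1, 1), x.snd⁻¹⟩⟩
  Group.ofLeftAxioms
    (fun x y z => by
      refine TwExt.ext ?_ (mul_assoc _ _ _)
      change x.fst + y.fst + f (x.snd, y.snd) + z.fst + f (x.snd * y.snd, z.snd) =
        x.fst + (y.fst + z.fst + f (y.snd, z.snd)) + f (x.snd, y.snd * z.snd)
      calc _ = x.fst + y.fst + z.fst + (f (x.snd * y.snd, z.snd) + f (x.snd, y.snd)) := by abel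
        _ = _ := by rw [hf]; abel)
    (fun x => by
      refine TwExt.ext ?_ (one_mul _)
      change - f (1, 1) + x.fst + f (1, x.snd) = x.fst
      have := hf 1 1 x.snd
      simp only [one_mul] at this
      rw [← add_right_cancel ((add_comm _ _).trans this)]
      abel)
    (fun x => by
      refine TwExt.ext ?_ (inv_mul_cancel _)
      change - x.fst - f (x.snd⁻¹, x.snd) - f (1, 1) + x.fst + f (x.snd⁻¹, x.snd) = - f (1, 1)
      abel)

/-- The inflation of a 2-cocycle to the free group is the coboundary of a function vanishing on
the generators. -/
lemma exists_cochain (f : G × G → A)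
    (hf : ∀ g h j : G, f (g * h, j) + f (g, h) = f (h, j) + f (g, h * j)) :
    ∃ h : FreeGroup G → A, (∀ g, h (FreeGroup.of g) = 0) ∧
      ∀ x y, h (x * y) = h x + h y + f (hopfπ G x, hopfπ G y) := by
  let _ := TwExt.group f hf
  let p : FreeGroup G →* TwExt f := FreeGroup.lift fun g => ⟨0, g⟩
  let s : TwExt f →* G := ⟨⟨TwExt.snd, rfl⟩, fun _ _ => rfl⟩
  have hs : s.comp p = hopfπ G := by
    ext g
    simp [p, s]
  have hs' (x) : (p x).snd = hopfπ G x := DFunLike.congr_fun hs x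
  refine ⟨fun x => (p x).fst, fun g => by simp [p], fun x y => ?_⟩
  simp only [map_mul, ← hs']
  rfl

lemma toCocycle_surjective : Function.Surjective (toCocycle G A) := by
  rintro ⟨f, hf'⟩
  have hf := (mem_cocycles_iff f).1 hf'
  obtain ⟨h, h_of, h_mul⟩ := exists_cochain f hf
  have f1 (g : G) : f (1, g) = f (1, 1) := by simpa using (hf 1 1 g).symm
  have f2 (g : G) : f (g, 1) = f (1, 1) := by simpa using hf g 1 1
  -- left and right translation by `N` act on `h` by the same character of `N`
  have hl (n x) (hn : hopfπ G n = 1) : h (n * x) = (h n + f (1, 1)) + h x := by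
    rw [h_mul, hn, f1]; abel
  have hr (n x) (hn : hopfπ G n = 1) : h (x * n) = (h n + f (1, 1)) + h x := by
    rw [h_mul, hn, f2]; abel
  let φ₀ : Additive (hopfN G) →+ A := AddMonoidHom.mk' (fun n => h n.toMul.1 + f (1, 1)) (by
    intro m n
    have := hl m.toMul.1 n.toMul.1 m.toMul.2
    simp only [toMul_add, Subgroup.coe_mul, this]
    abel)
  let φ : InvHom G A := ⟨φ₀, by
    intro x n hn hx
    have e1 := hl (x * n * x⁻¹) x hx
    rw [inv_mul_cancel_right, hr n x hn] at e1
    exact (add_right_cancel e1).symm⟩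
  refine ⟨φ, Subtype.ext (funext fun ⟨a, b⟩ => ?_)⟩
  rw [toCocycle_apply]
  have e1 := hl (FreeGroup.of a * FreeGroup.of b *
    (FreeGroup.of (hopfπ G (FreeGroup.of a * FreeGroup.of b)))⁻¹)
    (FreeGroup.of (hopfπ G (FreeGroup.of a * FreeGroup.of b))) (by simp)
  rw [inv_mul_cancel_right, h_mul, h_of, h_of, h_of, pi_of, pi_of] at e1
  simp only [add_zero, zero_add] at e1
  exact e1.symm

/-! ### Coboundaries -/

/-- An invariant homomorphism `N → A` has trivial cocycle class iff it extends to `F`. -/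
lemma toCocycle_mem_coboundaries_iff (φ : InvHom G A) :
    (toCocycle G A φ).1 ∈ groupCohomology.coboundaries₂ (Rep.trivial ℤ G A) ↔
      ∃ ψ : FreeGroup G →* Multiplicative A,
        ∀ n (hn : hopfπ G n = 1), (ψ n).toAdd = ev φ n hn := by
  refine (mem_coboundaries_iff _).trans ⟨?_, ?_⟩
  · rintro ⟨c, hc⟩
    simp only [toCocycle_apply] at hc
    let ψ : FreeGroup G →* Multiplicative A :=
      MonoidHom.mk' (fun x => .ofAdd (coch φ x + c (hopfπ G x))) (fun x y => by
        rw [← ofAdd_add, coch_mul, hc, map_mul]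
        congr 1
        abel)
    refine ⟨ψ, fun n hn => ?_⟩
    change coch φ n + c (hopfπ G n) = _
    rw [coch_of_mem φ hn, hc, hn, mul_one]
    abel
  · rintro ⟨ψ, hψ⟩
    refine ⟨fun g => (ψ (FreeGroup.of g)).toAdd, fun a b => ?_⟩
    rw [toCocycle_apply, coch, ← hψ]
    simp only [map_mul, map_inv, toAdd_mul, toAdd_inv, pi_of]
    abel

/-! ### Restriction to `N ∩ [F, F]` -/

/-- An invariant homomorphism kills `[F, N]`. -/
lemma ev_rel (φ : InvHom G A) {x : FreeGroup G}
    (hx : x ∈ ⁅(⊤ : Subgroup (FreeGroup G)), hopfN G⁆) (hx' : hopfπ G x = 1) :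
    ev φ x hx' = 0 := by
  have key : ⁅(⊤ : Subgroup (FreeGroup G)), hopfN G⁆ ≤
      (AddMonoidHom.toMultiplicativeRight φ.1).ker.map (hopfN G).subtype := by
    rw [Subgroup.commutator_le]
    intro g _ n hn
    have hn' : hopfπ G n = 1 := hn
    have hc : hopfπ G (g * n * g⁻¹ * n⁻¹) = 1 := by simp [hn']
    refine ⟨⟨g * n * g⁻¹ * n⁻¹, hc⟩, ?_, rfl⟩
    change ev φ (g * n * g⁻¹ * n⁻¹) _ = 0
    rw [ev_mul φ (by simp [hn']) (by simp [hn']), ev_conj φ g hn', ev_inv φ hn', add_neg_cancel]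
  obtain ⟨⟨y, hy⟩, hy0, rfl⟩ := key hx
  exact hy0

variable (G A) in
/-- Restriction of invariant homomorphisms `N → A` to `N ∩ [F, F]`, as homomorphisms on
`H₂(G) = (N ∩ [F, F]) / [F, N]`. -/
def toHom : InvHom G A →+ (Additive (GroupH2 G) →+ A) where
  toFun φ := MonoidHom.toAdditiveLeft <| QuotientGroup.lift (hopfRel G)
    ((AddMonoidHom.toMultiplicativeRight φ.1).comp
      (Subgroup.inclusion (inf_le_left : hopfTop G ≤ hopfN G)))
    (fun x hx => ev_rel φ hx x.2.1)
  map_zero' := by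
    ext x
    rfl
  map_add' _ _ := by
    ext x
    rfl

lemma toHom_apply (φ : InvHom G A) (x : hopfTop G) :
    toHom G A φ (.ofMul (QuotientGroup.mk x)) = ev φ x.1 x.2.1 := rfl

/-! ### Consequences of the freeness of the abelianization -/

/-- If `G^ab` is free, a splitting of `F^ab → G^ab` lifts to a homomorphism `t : F → N` which is
the identity on `N` modulo `[F, F]`. -/
lemma exists_retraction (hfree : Module.Free ℤ (Additive (Abelianization G))) :
    ∃ t : FreeGroup G →* hopfN G, ∀ n, hopfπ G n = 1 →
      n * (t n : FreeGroup G)⁻¹ ∈ commutator (FreeGroup G) := by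
  have π_surj : Function.Surjective (hopfπ G) := fun g => ⟨FreeGroup.of g, pi_of g⟩
  let p : Additive (Abelianization (FreeGroup G)) →ₗ[ℤ] Additive (Abelianization G) :=
    (MonoidHom.toAdditive (Abelianization.map (hopfπ G))).toIntLinearMap
  have hp : Function.Surjective p := by
    intro y
    obtain ⟨y, rfl⟩ := Additive.ofMul.surjective y
    obtain ⟨g, rfl⟩ := QuotientGroup.mk_surjective y
    obtain ⟨x, rfl⟩ := π_surj g
    exact ⟨.ofMul (Abelianization.of x), rfl⟩
  obtain ⟨s, hs⟩ := Module.projective_lifting_property p LinearMap.id hp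
  let σ : Abelianization G →* Abelianization (FreeGroup G) :=
    MonoidHom.toAdditive.symm s.toAddMonoidHom
  have hσ (y) : Abelianization.map (hopfπ G) (σ y) = y :=
    DFunLike.congr_fun hs (Additive.ofMul y)
  -- `[F, F]` maps onto `[G, G]`, so `ḡ - σ ḡ` lifts to an element of `N`
  have key (g : G) : ∃ n : hopfN G, Abelianization.of (n : FreeGroup G) *
      σ (Abelianization.of g) = Abelianization.of (FreeGroup.of g) := by
    obtain ⟨w, hw⟩ := QuotientGroup.mk_surjective (σ (Abelianization.of g))
    change Abelianization.of w = _ at hw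
    have h1 : hopfπ G (FreeGroup.of g * w⁻¹) ∈ commutator G := by
      rw [← Abelianization.ker_of, MonoidHom.mem_ker, ← Abelianization.map_of, map_mul, map_inv,
        hw, map_mul, map_inv, hσ]
      simp
    have h2 : commutator G = (commutator (FreeGroup G)).map (hopfπ G) := by
      rw [commutator_def, commutator_def, Subgroup.map_commutator,
        Subgroup.map_top_of_surjective _ π_surj]
    rw [h2] at h1
    obtain ⟨c, hc, hcg⟩ := h1
    have hc' : Abelianization.of c = 1 := by
      rw [← MonoidHom.mem_ker, Abelianization.ker_of]; exact hc
    refine ⟨⟨FreeGroup.of g * w⁻¹ * c⁻¹, ?_⟩, ?_⟩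
    · rw [mem_N, map_mul, map_inv, hcg, mul_inv_cancel]
    · simp [hc', ← hw]
  choose n hn using key
  let t : FreeGroup G →* hopfN G := FreeGroup.lift n
  have ht : (Abelianization.of.comp ((hopfN G).subtype.comp t)) *
      (σ.comp (Abelianization.of.comp (hopfπ G))) = Abelianization.of := by
    ext g
    simpa [t] using hn g
  refine ⟨t, fun m hm => ?_⟩
  have := DFunLike.congr_fun ht m
  simp only [MonoidHom.mul_apply, MonoidHom.comp_apply, hm, map_one, mul_one] at this
  rw [← Abelianization.ker_of, MonoidHom.mem_ker, map_mul, map_inv, ← this]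
  exact mul_inv_cancel _

lemma toHom_eq_zero_iff (hfree : Module.Free ℤ (Additive (Abelianization G))) (φ : InvHom G A) :
    toHom G A φ = 0 ↔ ∃ ψ : FreeGroup G →* Multiplicative A,
        ∀ n (hn : hopfπ G n = 1), (ψ n).toAdd = ev φ n hn := by
  constructor
  · intro h
    obtain ⟨t, ht⟩ := exists_retraction hfree
    refine ⟨(AddMonoidHom.toMultiplicativeRight φ.1).comp t, fun n hn => ?_⟩
    change ev φ (t n) (t n).2 = ev φ n hn
    have htn : hopfπ G (t n) = 1 := (t n).2
    have hm : hopfπ G (n * (t n : FreeGroup G)⁻¹) = 1 := by simp [hn, htn]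
    have e : ev φ (n * (t n : FreeGroup G)⁻¹) hm = 0 :=
      DFunLike.congr_fun h (.ofMul (QuotientGroup.mk ⟨_, hm, ht n hn⟩))
    rw [ev_mul φ hn (by simp [htn]), ev_inv φ htn, ← sub_eq_add_neg] at e
    exact (sub_eq_zero.1 e).symm
  · rintro ⟨ψ, hψ⟩
    ext x
    change ev φ x.1 x.2.1 = 0
    exact (hψ x.1 x.2.1).symm.trans
      (congrArg Multiplicative.toAdd (Abelianization.commutator_subset_ker ψ x.2.2))

/-- The image of `N` in `F / [F, N]` is central. -/
lemma mk_comm (x n : FreeGroup G) (hn : n ∈ hopfN G) :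
    (x : FreeGroup G ⧸ ⁅(⊤ : Subgroup (FreeGroup G)), hopfN G⁆) * n = n * x := by
  rw [← QuotientGroup.mk_mul, ← QuotientGroup.mk_mul, eq_comm, QuotientGroup.eq]
  simpa [commutatorElement_def, mul_assoc] using
    Subgroup.commutator_mem_commutator (Subgroup.mem_top x⁻¹) ((hopfN G).inv_mem hn)

lemma toHom_surjective (hfree : Module.Free ℤ (Additive (Abelianization G))) :
    Function.Surjective (toHom G A) := by
  intro θ
  obtain ⟨t, ht⟩ := exists_retraction hfree
  let Q := FreeGroup G ⧸ ⁅(⊤ : Subgroup (FreeGroup G)), hopfN G⁆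
  let θN (u : hopfTop G) : A := θ (.ofMul (QuotientGroup.mk u))
  have θN_mul (u v : hopfTop G) : θN (u * v) = θN u + θN v :=
    θ.map_add (.ofMul (QuotientGroup.mk u)) (.ofMul (QuotientGroup.mk v))
  -- `θN` only depends on the class in `F / [F, N]`, where the image of `N` is central
  have θN_congr (u v : hopfTop G) (h : ((u : FreeGroup G) : Q) = (v : FreeGroup G)) :
      θN u = θN v := by
    have : (QuotientGroup.mk u : GroupH2 G) = QuotientGroup.mk v := by
      rw [QuotientGroup.eq]
      exact (QuotientGroup.eq (s := ⁅(⊤ : Subgroup (FreeGroup G)), hopfN G⁆)).1 h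
    simp only [θN, this]
  have mem (n : hopfN G) : (n : FreeGroup G) * (t n : FreeGroup G)⁻¹ ∈ hopfTop G :=
    ⟨(hopfN G).mul_mem n.2 ((hopfN G).inv_mem (t n).2), ht n n.2⟩
  let φ₀ : Additive (hopfN G) →+ A := AddMonoidHom.mk' (fun n => θN ⟨_, mem n.toMul⟩) (by
    intro a b
    obtain ⟨m, rfl⟩ := Additive.ofMul.surjective a
    obtain ⟨n, rfl⟩ := Additive.ofMul.surjective b
    rw [← θN_mul]
    apply θN_congr
    have c := mk_comm (t m : FreeGroup G)⁻¹ _ (mem n).1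
    simp only [QuotientGroup.mk_mul, QuotientGroup.mk_inv] at c
    simp only [toMul_add, toMul_ofMul, Subgroup.coe_mul, map_mul, mul_inv_rev,
      QuotientGroup.mk_mul, QuotientGroup.mk_inv]
    simp only [mul_assoc] at c ⊢
    rw [c])
  let φ : InvHom G A := ⟨φ₀, by
    intro x n hn hx
    apply θN_congr
    have c1 := mk_comm x n hn
    have c2 := mk_comm (t x : FreeGroup G) (t n : FreeGroup G) (t n).2
    simp only [toMul_ofMul, map_mul, map_inv, Subgroup.coe_mul, Subgroup.coe_inv, mul_inv_rev,
      QuotientGroup.mk_mul, QuotientGroup.mk_inv, inv_inv]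
    rw [c1, mul_inv_cancel_right]
    have c3 := Commute.inv_right (show Commute _ _ from c2)
    rw [← mul_assoc (_ : Q) _ (_)⁻¹, c3.eq, mul_inv_cancel_right]⟩
  refine ⟨φ, ?_⟩
  ext x
  change θN ⟨x.1 * (t x.1 : FreeGroup G)⁻¹, _⟩ = θN x
  apply θN_congr
  -- `t` maps `[F, F]` into `[N, N]`, which is contained in `[F, N]`
  have h1 : (t x.1 : FreeGroup G) ∈ ⁅(⊤ : Subgroup (FreeGroup G)), hopfN G⁆ := by
    have h2 : (commutator (FreeGroup G)).map ((hopfN G).subtype.comp t) ≤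
        ⁅(⊤ : Subgroup (FreeGroup G)), hopfN G⁆ := by
      rw [commutator_def, Subgroup.map_commutator]
      apply Subgroup.commutator_mono le_top
      rintro _ ⟨y, _, rfl⟩
      exact (t y).2
    exact h2 ⟨x.1, x.2.2, rfl⟩
  rw [QuotientGroup.mk_mul, QuotientGroup.mk_inv, (QuotientGroup.eq_one_iff _).2 h1, inv_one,
    mul_one]

lemma nonempty_addEquiv_of_ker_eq {C H M : Type*} [AddCommGroup C] [AddCommGroup H]
    [AddCommGroup M] (α : C →+ H) (β : C →+ M) (hα : Function.Surjective α)
    (hβ : Function.Surjective β) (h : α.ker = β.ker) : Nonempty (H ≃+ M) :=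
  ⟨(QuotientAddGroup.quotientKerEquivOfSurjective α hα).symm.trans
    ((QuotientAddGroup.quotientAddEquivOfEq h).trans
      (QuotientAddGroup.quotientKerEquivOfSurjective β hβ))⟩

end HopfH2

/-- Universal coefficients: if the abelianization of `G` is free abelian (or trivial),
then for every trivial `G`-module `A` the second cohomology `H²(G; A)` is isomorphic
to `Hom(H₂(G), A)`. -/
theorem H2_universal_coefficients (G : Type) [Group G] (A : Type) [AddCommGroup A]
    (hfree : Module.Free ℤ (Additive (Abelianization G))) :
    Nonempty ((groupCohomology.H2 (Rep.trivial ℤ G A)) ≃+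
      (Additive (GroupH2 G) →+ A)) := by
  let q := (groupCohomology.H2π (Rep.trivial ℤ G A)).hom.toAddMonoidHom
  have hq : Function.Surjective q :=
    (ModuleCat.epi_iff_surjective (groupCohomology.H2π (Rep.trivial ℤ G A))).1 inferInstance
  refine HopfH2.nonempty_addEquiv_of_ker_eq (q.comp (HopfH2.toCocycle G A)) (HopfH2.toHom G A)
    (hq.comp HopfH2.toCocycle_surjective) (HopfH2.toHom_surjective hfree) ?_
  ext φ
  rw [AddMonoidHom.mem_ker, AddMonoidHom.mem_ker, HopfH2.toHom_eq_zero_iff hfree,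
    ← HopfH2.toCocycle_mem_coboundaries_iff]
  exact groupCohomology.H2π_eq_zero_iff _
end
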